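/- There exists an ergodic C^∞ diffeomorphism T of the torus 𝕋² preserving the Haar–Lebesgue probability measure λ such that T is measure-theoretically isomorphic to the rotation of the circle by some irrational number and the upper topological slow entropy of T with respect to the logarithmic scaling family a^{ln}_m(t) = (ln m)^t equals 1. -/

import Mathlib

open MeasureTheory Filter Set
open scoped Topology ENNReal NNReal

noncomputable section

/-- The Bowen metric `d_n^T(x,y) = max_{0 ≤ i ≤ n-1} d(T^i x, T^i y)`. -/
def bowenDist {X : Type*} [PseudoMetricSpace X] (T : X → X) (n : ℕ) (x y : X) : ℝ :=
  (((Finset.range n).sup fun i => nndist (T^[i] x) (T^[i] y)) : ℝ≥0)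

/-- `N_{d_n^T}(ε)`: the minimal number of `(ε,n)`-Bowen balls of `T` needed to cover the
whole space. -/
def bowenCoverNum {X : Type*} [PseudoMetricSpace X] (T : X → X) (n : ℕ) (ε : ℝ) : ℕ :=
  sInf {N : ℕ | ∃ F : Finset X, F.card = N ∧ ∀ y : X, ∃ x ∈ F, bowenDist T n x y < ε}

/-- `N(ε)`: the supremum (`0` if the set is empty, by the `Real.sSup` convention) of all
`t > 0` such that `limsup_n N_{d_n^T}(ε) / a_n(t) > 0`. -/
def topSlowEntFun {X : Type*} [PseudoMetricSpace X] (T : X → X) (a : ℕ → ℝ → ℝ) (ε : ℝ) : ℝ :=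
  sSup {t : ℝ | 0 < t ∧
    0 < Filter.atTop.limsup fun n => (bowenCoverNum T n ε : ℝ≥0∞) / ENNReal.ofReal (a n t)}

/-- The upper topological slow entropy of `T` with respect to the scaling family `a`
equals `E`, i.e. `N(ε) → E` as `ε → 0⁺`. -/
def HasUpperTopSlowEntropy {X : Type*} [PseudoMetricSpace X] (T : X → X)
    (a : ℕ → ℝ → ℝ) (E : ℝ) : Prop :=
  Filter.Tendsto (topSlowEntFun T a) (𝓝[>] (0 : ℝ)) (𝓝 E)

/-- The circle `𝕋¹ = ℝ/ℤ` with its quotient metric and Haar–Lebesgue probability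
measure `volume`. -/
abbrev Torus1 : Type := AddCircle (1 : ℝ)

/-- The 2-torus `𝕋² = ℝ²/ℤ²`, with its quotient (flat) metric, its Borel σ-algebra and
its Haar–Lebesgue probability measure `volume`. -/
abbrev Torus2 : Type := AddCircle (1 : ℝ) × AddCircle (1 : ℝ)

/-- Canonical projection `ℝ² → 𝕋²`. -/
def torusProj : ℝ × ℝ → Torus2 := fun p => ((p.1 : Torus1), (p.2 : Torus1))

/-- `F : ℝ² → ℝ²` is a lift of `T : 𝕋² → 𝕋²`. -/
def IsLiftOf (F : ℝ × ℝ → ℝ × ℝ) (T : Torus2 → Torus2) : Prop :=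
  ∀ p, torusProj (F p) = T (torusProj p)

/-- `T` is a `C^k` diffeomorphism of the torus: it is a bijection and both `T` and `T⁻¹`
admit `C^k` lifts to the universal cover `ℝ²`. -/
def IsCkTorusDiffeo (k : ℕ∞) (T : Torus2 → Torus2) : Prop :=
  Function.Bijective T ∧
  (∃ F : ℝ × ℝ → ℝ × ℝ, ContDiff ℝ k F ∧ IsLiftOf F T) ∧
  (∃ G : ℝ × ℝ → ℝ × ℝ, ContDiff ℝ k G ∧ IsLiftOf G (Function.invFun T))

/-- `T` is weakly mixing w.r.t. the measure `μ`: `T × T` is ergodic for `μ × μ`. -/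
def WeaklyMixing {X : Type*} [MeasurableSpace X] (T : X → X) (μ : Measure X) : Prop :=
  Ergodic (fun p : X × X => (T p.1, T p.2)) (μ.prod μ)

/-- `T` is uniquely ergodic with the Haar–Lebesgue measure `volume` as its unique
invariant Borel probability measure. -/
def UniquelyErgodicWithVolume (T : Torus2 → Torus2) : Prop :=
  MeasurePreserving T volume volume ∧
  ∀ μ : Measure Torus2, IsProbabilityMeasure μ → MeasurePreserving T μ μ → μ = volume

/-- `T` (preserving the Haar measure `volume` on `𝕋²`) is measure-theoretically isomorphic
to the rotation of the circle `𝕋¹ = ℝ/ℤ` by some irrational number `α`. -/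
def IsoToIrrationalRotation (T : Torus2 → Torus2) : Prop :=
  ∃ α : ℝ, Irrational α ∧
    ∃ (A : Set Torus2) (B : Set Torus1) (ψ : Torus2 → Torus1) (φ : Torus1 → Torus2),
      MeasurableSet A ∧ MeasurableSet B ∧
      volume Aᶜ = 0 ∧ volume Bᶜ = 0 ∧
      Set.MapsTo T A A ∧ Set.MapsTo (fun y : Torus1 => y + (α : Torus1)) B B ∧
      Measurable ψ ∧ Measurable φ ∧
      Set.MapsTo ψ A B ∧ Set.MapsTo φ B A ∧
      (∀ x ∈ A, φ (ψ x) = x) ∧ (∀ y ∈ B, ψ (φ y) = y) ∧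
      Measure.map ψ volume = volume ∧
      (∀ x ∈ A, ψ (T x) = ψ x + (α : Torus1))

/-- A finite measurable partition of `X`. -/
structure FinMeasPartition (X : Type*) [MeasurableSpace X] where
  card : ℕ
  piece : Fin card → Set X
  measurable : ∀ i, MeasurableSet (piece i)
  disjoint : Pairwise fun i j => Disjoint (piece i) (piece j)
  cover : (⋃ i, piece i) = Set.univ

open Classical in
/-- The normalized Hamming distance between the length-`n` `P`-codings of the `T`-orbits
of `x` and `y` (the codings differ at time `k` iff `T^k x` and `T^k y` lie in different
pieces of `P`). -/
def codeHammingDist {X : Type*} [MeasurableSpace X] (T : X → X) (P : FinMeasPartition X)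
    (n : ℕ) (x y : X) : ℝ :=
  (((Finset.range n).filter fun k =>
      ¬ ∃ i, T^[k] x ∈ P.piece i ∧ T^[k] y ∈ P.piece i).card : ℝ) / n

/-- `S^H_P(T,n,ε)`: the minimal number of `(ε,n)`-Hamming balls whose union has
`μ`-measure greater than `1 - ε`. -/
def hammingCoverNum {X : Type*} [MeasurableSpace X] (μ : Measure X) (T : X → X)
    (P : FinMeasPartition X) (n : ℕ) (ε : ℝ) : ℕ :=
  sInf {N : ℕ | ∃ F : Finset X, F.card = N ∧
    ENNReal.ofReal (1 - ε) < μ (⋃ x ∈ F, {y | codeHammingDist T P n x y < ε})}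

/-- For a fixed partition `P` and `ε > 0`: the supremum (with the `Real.sSup` convention,
`0` if the set is empty) of all `t > 0` with `limsup_n S^H_P(T,n,ε)/a_n(t) > 0`. -/
def measSlowEntFun {X : Type*} [MeasurableSpace X] (μ : Measure X) (T : X → X)
    (a : ℕ → ℝ → ℝ) (P : FinMeasPartition X) (ε : ℝ) : ℝ :=
  sSup {t : ℝ | 0 < t ∧
    0 < Filter.atTop.limsup fun n =>
      (hammingCoverNum μ T P n ε : ℝ≥0∞) / ENNReal.ofReal (a n t)}

/-- The upper measure-theoretic slow entropy of `(T,μ)` w.r.t. the scaling family `a`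
equals `E`: for every finite measurable partition the limit as `ε → 0⁺` exists, and the
least upper bound over all partitions of these limits is `E`. -/
def HasUpperMeasSlowEntropy {X : Type*} [MeasurableSpace X] (μ : Measure X) (T : X → X)
    (a : ℕ → ℝ → ℝ) (E : ℝ) : Prop :=
  (∀ P : FinMeasPartition X, ∃ e : ℝ,
      Filter.Tendsto (measSlowEntFun μ T a P) (𝓝[>] (0 : ℝ)) (𝓝 e)) ∧
  IsLUB {e : ℝ | ∃ P : FinMeasPartition X,
      Filter.Tendsto (measSlowEntFun μ T a P) (𝓝[>] (0 : ℝ)) (𝓝 e)} E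

/-- `Γ_r(x) = (Γ(x^{1/r} + 1))^r`, where `Γ` is the Euler Gamma function. -/
def GammaR (r : ℕ) (x : ℝ) : ℝ := (Real.Gamma (x ^ ((r : ℝ)⁻¹) + 1)) ^ r

/-- The inverse of `Γ_r` on `[1,∞)` (where `Γ_r` is strictly increasing with `Γ_r 1 = 1`). -/
def GammaRInv (r : ℕ) (y : ℝ) : ℝ := sSup {x : ℝ | 1 ≤ x ∧ GammaR r x ≤ y}

/-- The intermediate scaling family `a^{int1,r}_m(t) = m^(t / Γ_r⁻¹(ln m / ln q₁))`. -/
def intScale1 (r q₁ : ℕ) (m : ℕ) (t : ℝ) : ℝ :=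
  (m : ℝ) ^ (t / GammaRInv r (Real.log m / Real.log q₁))

/-- The intermediate scaling family
`a^{int2,r}_m(t) = m^(t / (Γ_r⁻¹(ln m / ln q₁))^((r-2)/r))`. -/
def intScale2 (r q₁ : ℕ) (m : ℕ) (t : ℝ) : ℝ :=
  (m : ℝ) ^ (t / GammaRInv r (Real.log m / Real.log q₁) ^ (((r : ℝ) - 2) / (r : ℝ)))

/-- The logarithmic scaling family `a^{ln}_m(t) = (ln m)^t`. -/
def logScale (m : ℕ) (t : ℝ) : ℝ := Real.log m ^ t

/-- The polynomial scaling family `a^{pol}_m(t) = m^t`. -/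
def polScale (m : ℕ) (t : ℝ) : ℝ := (m : ℝ) ^ t

end

/-!
The diffeomorphism is an Anosov–Katok limit of periodic maps `T n = H n ∘ R_{α n} ∘ (H n)⁻¹`, where
`R_α (x, y) = (x + α, y)`. With `s` a smoothed sawtooth, put `H (n + 1) = H n ∘ A ∘ B⁻¹`, where
`A (x, y) = (x, y + k s(q x))` is a vertical shear commuting with `R_{1/q}`, `q` is the denominator
of `α n`, and `B` is a horizontal shear by `s(y) / (k q)`; then take
`α (n + 1) = α n + 1 / (q 4 ^ k)`. The derivatives of `H (n + 1)` are polynomial in the integer `k`,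
while the change of angle is exponentially small in it, so for `k` large the `T n` converge in
`C^∞`.

Up to time `2 ^ k` the orbits of the limit are covered by about `k` Bowen balls, whereas by time
`q 4 ^ k`, whose logarithm is of order `k`, a vertical shear of slope about `k` has separated about
`k` points. Hence the entropy is `1` at the logarithmic scale.

The shear `B` makes `H (n + 1)` squeeze most of each circle `{x} × 𝕋` into a set of small diameter,
so the limit of the first coordinates of the `(H n)⁻¹` is a factor map onto a circle rotation which,
by Borel–Cantelli, is injective almost everywhere. The angle of that rotation is irrational because
the `α n` approach it too fast.
-/

open scoped ContDiff

noncomputable section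

section Limits

lemma tendsto_two_mul_half_pow : Tendsto (fun n : ℕ => 2 * (1 / 2 : ℝ) ^ n) atTop (𝓝 0) := by
  simpa using (tendsto_pow_atTop_nhds_zero_of_lt_one (r := (1 / 2 : ℝ)) (by norm_num)
    (by norm_num)).const_mul 2

lemma tendstoUniformly_of_dist_le_half_pow {α β : Type*} [PseudoMetricSpace β] {f : ℕ → α → β}
    {g : α → β} (h : ∀ n x, dist (f n x) (g x) ≤ 2 * (1 / 2) ^ n) :
    TendstoUniformly f g atTop := by
  refine Metric.tendstoUniformly_iff.2 fun ε hε => ?_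
  filter_upwards [tendsto_two_mul_half_pow.eventually_lt_const hε] with n hn x
  rw [dist_comm]
  exact (h n x).trans_lt hn

lemma exists_contDiff_limit {E F : Type*} [NormedAddCommGroup E] [NormedSpace ℝ E]
    [NormedAddCommGroup F] [NormedSpace ℝ F] [CompleteSpace F] {f : ℕ → E → F}
    (hf : ∀ n, ContDiff ℝ ∞ (f n))
    (hd : ∀ n, ∀ i ≤ n, ∀ x, ‖iteratedFDeriv ℝ i (fun y => f (n + 1) y - f n y) x‖ ≤ (1 / 2) ^ n) :
    ∃ g : E → F, ContDiff ℝ ∞ g ∧ ∀ n x, dist (f n x) (g x) ≤ 2 * (1 / 2) ^ n := by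
  have hd₀ (n x) : ‖f (n + 1) x - f n x‖ ≤ (1 / 2) ^ n := by
    simpa using hd n 0 n.zero_le x
  have hlim (x) : Tendsto (fun n => f n x) atTop (𝓝 (f 0 x + ∑' n, (f (n + 1) x - f n x))) := by
    have hs : Summable fun n => f (n + 1) x - f n x :=
      .of_norm_bounded summable_geometric_two fun n => hd₀ n x
    refine (hs.hasSum.tendsto_sum_nat.const_add (f 0 x)).congr fun n => ?_
    rw [Finset.sum_range_sub (fun n => f n x), add_sub_cancel]
  refine ⟨fun x => f 0 x + ∑' n, (f (n + 1) x - f n x), (hf 0).add ?_, fun n x => ?_⟩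
  · refine contDiff_tsum_of_eventually (v := fun _ n => (1 / 2 : ℝ) ^ n)
      (fun n => (hf (n + 1)).sub (hf n)) (fun _ _ => summable_geometric_two) fun i _ => ?_
    rw [Nat.cofinite_eq_atTop]
    filter_upwards [eventually_ge_atTop i] with n hn x using hd n i hn x
  · have := dist_le_of_le_geometric_of_tendsto (1 / 2 : ℝ) 1 (by norm_num)
      (fun n => by rw [dist_comm, dist_eq_norm, one_mul]; exact hd₀ n x) (hlim x) n
    exact this.trans_eq (by ring)

lemma measurePreserving_of_tendsto {X Y : Type*} [MeasurableSpace X] [PseudoMetricSpace Y]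
    [MeasurableSpace Y] [BorelSpace Y] {μ : Measure X} {ν : Measure Y} [IsFiniteMeasure μ]
    {f : ℕ → X → Y} {g : X → Y} (hf : ∀ n, MeasurePreserving (f n) μ ν)
    (hlim : ∀ x, Tendsto (fun n => f n x) atTop (𝓝 (g x))) : MeasurePreserving g μ ν := by
  have hg : Measurable g :=
    measurable_of_tendsto_metrizable (fun n => (hf n).measurable) (tendsto_pi_nhds.2 hlim)
  have : IsFiniteMeasure (μ.map g) := Measure.isFiniteMeasure_map μ g
  have : IsFiniteMeasure ν := (hf 0).map_eq ▸ Measure.isFiniteMeasure_map μ (f 0)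
  refine ⟨hg, ext_of_forall_integral_eq_of_IsFiniteMeasure fun φ => ?_⟩
  have hφ : Tendsto (fun n => ∫ x, φ (f n x) ∂μ) atTop (𝓝 (∫ x, φ (g x) ∂μ)) :=
    tendsto_integral_of_dominated_convergence (fun _ => ‖φ‖)
      (fun n => (φ.continuous.measurable.comp (hf n).measurable).aestronglyMeasurable)
      (integrable_const _) (fun n => .of_forall fun x => φ.norm_coe_le_norm _)
      (.of_forall fun x => (φ.continuous.tendsto _).comp (hlim x))
  have hφν (n) : ∫ x, φ (f n x) ∂μ = ∫ y, φ y ∂ν := by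
    rw [← (hf n).map_eq, integral_map (hf n).measurable.aemeasurable
      φ.continuous.measurable.aestronglyMeasurable]
  simp only [hφν] at hφ
  rw [integral_map hg.aemeasurable φ.continuous.measurable.aestronglyMeasurable]
  exact tendsto_nhds_unique hφ tendsto_const_nhds

end Limits

section TorusLift

instance : IsProbabilityMeasure (volume : Measure Torus1) :=
  ⟨by rw [AddCircle.measure_univ, ENNReal.ofReal_one]⟩

lemma Torus1.coe_eq_coe_iff {x y : ℝ} : (x : Torus1) = y ↔ ∃ m : ℤ, x = y + m := by
  rw [← sub_eq_zero, ← AddCircle.coe_sub, AddCircle.coe_eq_zero_iff]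
  simp only [zsmul_eq_mul, mul_one, sub_eq_iff_eq_add', @eq_comm ℝ _ (x - y)]

lemma isOpenQuotientMap_torusProj : IsOpenQuotientMap torusProj := by
  have h : IsOpenQuotientMap fun x : ℝ => (x : Torus1) := QuotientAddGroup.isOpenQuotientMap_mk
  exact h.prodMap h

lemma torusProj_surjective : Function.Surjective torusProj :=
  isOpenQuotientMap_torusProj.surjective

lemma torusProj_eq_torusProj_iff {p p' : ℝ × ℝ} :
    torusProj p = torusProj p' ↔ ∃ m n : ℤ, p = p' + ((m : ℝ), (n : ℝ)) := by
  simp only [torusProj, Prod.ext_iff, Torus1.coe_eq_coe_iff, Prod.fst_add, Prod.snd_add,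
    exists_and_left, exists_and_right]

lemma torusProj_add_int (p : ℝ × ℝ) (m n : ℤ) :
    torusProj (p + ((m : ℝ), (n : ℝ))) = torusProj p :=
  torusProj_eq_torusProj_iff.2 ⟨m, n, rfl⟩

lemma Torus1.dist_coe_le (x y : ℝ) : dist (x : Torus1) y ≤ dist x y := by
  rw [dist_eq_norm, ← AddCircle.coe_sub, Real.dist_eq]
  exact QuotientAddGroup.norm_mk_le_norm

lemma dist_torusProj_le (p p' : ℝ × ℝ) : dist (torusProj p) (torusProj p') ≤ dist p p' :=
  max_le_max (Torus1.dist_coe_le _ _) (Torus1.dist_coe_le _ _)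

lemma Torus1.le_norm_of_abs_sub_half_le {x δ : ℝ} (h : |x - 1 / 2| ≤ δ) :
    1 / 2 - δ ≤ ‖(x : Torus1)‖ := by
  have h1 := abs_le.1 h
  rw [UnitAddCircle.norm_eq, le_abs]
  rcases le_or_gt (round x) 0 with h0 | h0
  · have : (round x : ℝ) ≤ 0 := by exact_mod_cast h0
    left; linarith
  · have : (1 : ℝ) ≤ round x := by exact_mod_cast h0
    right; linarith

lemma exists_norm_le_of_int_periodic {F : Type*} [SeminormedAddCommGroup F] {f : ℝ × ℝ → F}
    (hf : Continuous f) (hper : ∀ p (m n : ℤ), f (p + ((m : ℝ), (n : ℝ))) = f p) :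
    ∃ C, ∀ p, ‖f p‖ ≤ C := by
  obtain ⟨C, hC⟩ := (isCompact_Icc (a := ((0, 0) : ℝ × ℝ))
    (b := (1, 1))).exists_bound_of_continuousOn hf.continuousOn
  refine ⟨C, fun p => ?_⟩
  have hp : p = (Int.fract p.1, Int.fract p.2) + ((⌊p.1⌋ : ℝ), (⌊p.2⌋ : ℝ)) :=
    Prod.ext (Int.fract_add_floor _).symm (Int.fract_add_floor _).symm
  rw [hp, hper]
  exact hC _ ⟨⟨Int.fract_nonneg _, Int.fract_nonneg _⟩,
    ⟨(Int.fract_lt_one _).le, (Int.fract_lt_one _).le⟩⟩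

/-- `H` commutes with the deck transformations of `ℝ² → 𝕋²`, i.e. it lifts a map of `𝕋²` acting
trivially on the fundamental group. -/
def IntEquivariant (H : ℝ × ℝ → ℝ × ℝ) : Prop :=
  ∀ p (m n : ℤ), H (p + ((m : ℝ), (n : ℝ))) = H p + ((m : ℝ), (n : ℝ))

/-- The map of `𝕋²` lifted by `H`, for `H` commuting with integer translations; in general `H` is
evaluated at a chosen representative. -/
def descend (H : ℝ × ℝ → ℝ × ℝ) : Torus2 → Torus2 :=
  fun z => torusProj (H (Function.surjInv torusProj_surjective z))

namespace IntEquivariant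

variable {H K : ℝ × ℝ → ℝ × ℝ}

lemma descend_torusProj (hH : IntEquivariant H) (p : ℝ × ℝ) :
    descend H (torusProj p) = torusProj (H p) := by
  obtain ⟨m, n, h⟩ := torusProj_eq_torusProj_iff.1
    (Function.surjInv_eq torusProj_surjective (torusProj p))
  rw [descend, h, hH, torusProj_add_int]

lemma comp (hH : IntEquivariant H) (hK : IntEquivariant K) : IntEquivariant (H ∘ K) :=
  fun p m n => by simp only [Function.comp_apply, hK p, hH (K p)]

lemma descend_comp (hH : IntEquivariant H) : descend (H ∘ K) = descend H ∘ descend K :=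
  funext fun _ => (hH.descend_torusProj (K _)).symm

lemma continuous_descend (hH : IntEquivariant H) (hc : Continuous H) :
    Continuous (descend H) := by
  refine isOpenQuotientMap_torusProj.isQuotientMap.continuous_iff.2 ?_
  rw [funext hH.descend_torusProj (g := torusProj ∘ H) (f := descend H ∘ torusProj)]
  exact isOpenQuotientMap_torusProj.continuous.comp hc

lemma exists_norm_sub_le (hH : IntEquivariant H) (hc : Continuous H) :
    ∃ C, ∀ p, ‖H p - p‖ ≤ C :=
  exists_norm_le_of_int_periodic (hc.sub continuous_id) fun p m n => by
    simp only [hH p, add_sub_add_right_eq_sub]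

lemma exists_norm_iteratedFDeriv_le (hH : IntEquivariant H) (hs : ContDiff ℝ ∞ H) {i : ℕ}
    (hi : i ≠ 0) : ∃ C, ∀ p, ‖iteratedFDeriv ℝ i H p‖ ≤ C := by
  refine exists_norm_le_of_int_periodic
    (hs.continuous_iteratedFDeriv (by exact_mod_cast le_top)) fun p m n => ?_
  rw [← iteratedFDeriv_comp_add_right, funext fun q => hH q m n,
    show (fun q => H q + ((m : ℝ), (n : ℝ))) = H + fun _ => ((m : ℝ), (n : ℝ)) from rfl,
    iteratedFDeriv_add (hs.of_le (by exact_mod_cast le_top)) contDiff_const, Pi.add_apply,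
    iteratedFDeriv_const_of_ne hi, Pi.zero_apply, add_zero]

end IntEquivariant

/-- `H` is the lift of a `C^∞` volume-preserving diffeomorphism of `𝕋²` acting trivially on the
fundamental group. -/
structure IsVolumeLift (H : Equiv.Perm (ℝ × ℝ)) : Prop where
  equivariant : IntEquivariant H
  contDiff : ContDiff ℝ ∞ H
  contDiff_symm : ContDiff ℝ ∞ H.symm
  measurePreserving : MeasurePreserving (descend H) volume volume

namespace IsVolumeLift

variable {H K : Equiv.Perm (ℝ × ℝ)}

lemma equivariant_symm (hH : IsVolumeLift H) : IntEquivariant H.symm := fun p m n =>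
  H.injective <| by simp only [Equiv.apply_symm_apply, hH.equivariant (H.symm p)]

lemma descend_symm_descend (hH : IsVolumeLift H) (z : Torus2) :
    descend H.symm (descend H z) = z := by
  obtain ⟨p, rfl⟩ := torusProj_surjective z
  rw [hH.equivariant.descend_torusProj, hH.equivariant_symm.descend_torusProj,
    Equiv.symm_apply_apply]

lemma continuous_descend (hH : IsVolumeLift H) : Continuous (descend H) :=
  hH.equivariant.continuous_descend hH.contDiff.continuous

lemma inv (hH : IsVolumeLift H) : IsVolumeLift H⁻¹ where
  equivariant := hH.equivariant_symm
  contDiff := hH.contDiff_symm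
  contDiff_symm := hH.contDiff
  measurePreserving := by
    have hm := (hH.equivariant_symm.continuous_descend hH.contDiff_symm.continuous).measurable
    refine ⟨hm, ?_⟩
    conv_lhs => rw [Equiv.Perm.coe_inv, ← hH.measurePreserving.map_eq]
    rw [Measure.map_map hm hH.measurePreserving.measurable,
      funext hH.descend_symm_descend (g := id) (f := descend H.symm ∘ descend H), Measure.map_id]

lemma mul (hH : IsVolumeLift H) (hK : IsVolumeLift K) : IsVolumeLift (H * K) where
  equivariant := hH.equivariant.comp hK.equivariant
  contDiff := hH.contDiff.comp hK.contDiff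
  contDiff_symm := hK.contDiff_symm.comp hH.contDiff_symm
  measurePreserving := by
    rw [Equiv.Perm.coe_mul, hH.equivariant.descend_comp]
    exact hH.measurePreserving.comp hK.measurePreserving

lemma isCkTorusDiffeo (hH : IsVolumeLift H) : IsCkTorusDiffeo ⊤ (descend H) := by
  have hl : Function.LeftInverse (descend H.symm) (descend H) := hH.descend_symm_descend
  have hr : Function.RightInverse (descend H.symm) (descend H) := by
    exact hH.inv.descend_symm_descend
  refine ⟨⟨hl.injective, hr.surjective⟩,
    ⟨H, hH.contDiff, fun p => (hH.equivariant.descend_torusProj p).symm⟩,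
    ⟨H.symm, hH.contDiff_symm, fun p => ?_⟩⟩
  rw [Function.invFun_eq_of_injective_of_rightInverse hl.injective hr,
    hH.equivariant_symm.descend_torusProj]

lemma exists_limit {P : ℕ → Equiv.Perm (ℝ × ℝ)} (hP : ∀ n, IsVolumeLift (P n))
    (hd : ∀ n, ∀ i ≤ n, ∀ p,
      ‖iteratedFDeriv ℝ i (fun y => P (n + 1) y - P n y) p‖ ≤ (1 / 2) ^ n)
    (hd' : ∀ n, ∀ i ≤ n, ∀ p,
      ‖iteratedFDeriv ℝ i (fun y => (P (n + 1)).symm y - (P n).symm y) p‖ ≤ (1 / 2) ^ n) :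
    ∃ Q, IsVolumeLift Q ∧ ∀ n p, dist (P n p) (Q p) ≤ 2 * (1 / 2) ^ n := by
  obtain ⟨g, hg, hPg⟩ := exists_contDiff_limit (fun n => (hP n).contDiff) hd
  obtain ⟨g', hg', hPg'⟩ := exists_contDiff_limit (fun n => (hP n).contDiff_symm) hd'
  have hu := tendstoUniformly_of_dist_le_half_pow hPg
  have hu' := tendstoUniformly_of_dist_le_half_pow hPg'
  have hl (p) : g' (g p) = p := by
    refine tendsto_nhds_unique (hu'.tendsto_comp hg'.continuous.continuousAt (hu.tendsto_at p)) ?_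
    simp only [Equiv.symm_apply_apply, tendsto_const_nhds]
  have hr (p) : g (g' p) = p := by
    refine tendsto_nhds_unique (hu.tendsto_comp hg.continuous.continuousAt (hu'.tendsto_at p)) ?_
    simp only [Equiv.apply_symm_apply, tendsto_const_nhds]
  have heq : IntEquivariant g := fun p m n =>
    tendsto_nhds_unique (hu.tendsto_at _) <| ((hu.tendsto_at p).add_const _).congr fun k =>
      ((hP k).equivariant p m n).symm
  refine ⟨⟨g, g', hl, hr⟩, ⟨heq, hg, hg', ?_⟩, hPg⟩
  refine measurePreserving_of_tendsto (fun n => (hP n).measurePreserving) fun z => ?_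
  obtain ⟨p, rfl⟩ := torusProj_surjective z
  simp only [(hP _).equivariant.descend_torusProj]
  exact heq.descend_torusProj p ▸
    (isOpenQuotientMap_torusProj.continuous.tendsto _).comp (hu.tendsto_at p)

end IsVolumeLift

end TorusLift

section Derivatives

variable {E F G : Type*} [NormedAddCommGroup E] [NormedSpace ℝ E] [NormedAddCommGroup F]
  [NormedSpace ℝ F] [NormedAddCommGroup G] [NormedSpace ℝ G]

lemma iteratedFDeriv_sub_const {f : E → F} (hf : ContDiff ℝ ∞ f) (c : F) {i : ℕ} (hi : i ≠ 0) :
    iteratedFDeriv ℝ i (fun y => f y - c) = iteratedFDeriv ℝ i f := by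
  rw [show (fun y => f y - c) = f - fun _ => c from rfl,
    iteratedFDeriv_sub (hf.of_le (by exact_mod_cast le_top)) contDiff_const,
    iteratedFDeriv_const_of_ne hi, sub_zero]

lemma dist_le_mul_of_norm_iteratedFDeriv_one_le {f : E → F} (hf : ContDiff ℝ ∞ f) {C : ℝ}
    (hC : ∀ x, ‖iteratedFDeriv ℝ 1 f x‖ ≤ C) (x y : E) : dist (f x) (f y) ≤ C * dist x y := by
  rw [dist_eq_norm, dist_eq_norm]
  refine convex_univ.norm_image_sub_le_of_norm_fderiv_le (𝕜 := ℝ)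
    (fun z _ => hf.differentiable (by simp) z) (fun z _ => ?_) (mem_univ y) (mem_univ x)
  rw [← norm_iteratedFDeriv_one]
  exact hC z

lemma norm_iteratedFDeriv_translate_sub_le {f : E → F} (hf : ContDiff ℝ ∞ f) {i : ℕ} {C : ℝ}
    (hC : ∀ x, ‖iteratedFDeriv ℝ (i + 1) f x‖ ≤ C) (a b x : E) :
    ‖iteratedFDeriv ℝ i (fun y => f (y + a) - f (y + b)) x‖ ≤ C * ‖a - b‖ := by
  have ht (c : E) : ContDiff ℝ i fun y => f (y + c) :=
    (hf.of_le (by exact_mod_cast le_top)).comp (contDiff_id.add contDiff_const)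
  rw [show (fun y => f (y + a) - f (y + b)) = (fun y => f (y + a)) - fun y => f (y + b) from rfl,
    iteratedFDeriv_sub (ht a) (ht b), Pi.sub_apply, iteratedFDeriv_comp_add_right,
    iteratedFDeriv_comp_add_right, ← add_sub_add_left_eq_sub a b x]
  refine convex_univ.norm_image_sub_le_of_norm_fderiv_le (𝕜 := ℝ)
    (fun y _ => hf.differentiable_iteratedFDeriv (by exact_mod_cast WithTop.coe_lt_top i) y)
    (fun y _ => ?_) (mem_univ _) (mem_univ _)
  rw [norm_fderiv_iteratedFDeriv]
  exact hC y

/-- The `f k` are smooth and, for every order `i ≠ 0`, their derivatives of order `i` are bounded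
by a polynomial in `k`. The bound is stated with `k + 1` so that it carries no condition on `k`. -/
structure PolyBoundedDerivs (f : ℕ → E → F) : Prop where
  contDiff : ∀ k, ContDiff ℝ ∞ (f k)
  bound : ∀ i ≠ 0, ∃ C : ℝ, ∃ p : ℕ, ∀ k x, ‖iteratedFDeriv ℝ i (f k) x‖ ≤ C * ((k : ℝ) + 1) ^ p

namespace PolyBoundedDerivs

lemma exists_uniform_bound {f : ℕ → E → F} (hf : PolyBoundedDerivs f) (r : ℕ) :
    ∃ C : ℝ, 1 ≤ C ∧ ∃ p : ℕ, ∀ i ≠ 0, i ≤ r → ∀ k x,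
      ‖iteratedFDeriv ℝ i (f k) x‖ ≤ C * ((k : ℝ) + 1) ^ p := by
  choose! C p hCp using hf.bound
  refine ⟨1 + ∑ i ∈ Finset.range (r + 1), |C i|, ?_, ∑ i ∈ Finset.range (r + 1), p i,
    fun i hi hir k x => (hCp i hi k x).trans ?_⟩
  · exact le_add_of_nonneg_right (Finset.sum_nonneg fun _ _ => abs_nonneg _)
  have hmem : i ∈ Finset.range (r + 1) := Finset.mem_range.2 (by omega)
  have hC : C i ≤ 1 + ∑ j ∈ Finset.range (r + 1), |C j| :=
    (le_abs_self _).trans <| (Finset.single_le_sum (f := fun j => |C j|)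
      (fun _ _ => abs_nonneg _) hmem).trans (le_add_of_nonneg_left zero_le_one)
  have hp : p i ≤ ∑ j ∈ Finset.range (r + 1), p j :=
    Finset.single_le_sum (fun _ _ => Nat.zero_le _) hmem
  gcongr
  linarith [k.cast_nonneg (α := ℝ)]

lemma const {f : E → F} (hf : ContDiff ℝ ∞ f)
    (h : ∀ i ≠ 0, ∃ C, ∀ x, ‖iteratedFDeriv ℝ i f x‖ ≤ C) : PolyBoundedDerivs fun _ => f where
  contDiff _ := hf
  bound i hi := by
    obtain ⟨C, hC⟩ := h i hi
    exact ⟨C, 0, fun k x => by simpa using hC x⟩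

lemma clm (L : E →L[ℝ] F) : PolyBoundedDerivs fun _ => ⇑L := by
  refine const L.contDiff fun i hi => ⟨‖L‖, fun x => ?_⟩
  obtain ⟨j, rfl⟩ := Nat.exists_eq_succ_of_ne_zero hi
  have hL : fderiv ℝ L = fun _ => L := funext fun _ => L.fderiv
  rw [Nat.succ_eq_add_one, ← norm_iteratedFDeriv_fderiv, hL]
  rcases eq_or_ne j 0 with rfl | hj
  · rw [norm_iteratedFDeriv_zero]
  · rw [iteratedFDeriv_const_of_ne hj, Pi.zero_apply, norm_zero]
    exact norm_nonneg L

lemma comp {g : ℕ → F → G} {f : ℕ → E → F} (hg : PolyBoundedDerivs g)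
    (hf : PolyBoundedDerivs f) : PolyBoundedDerivs fun k => g k ∘ f k where
  contDiff k := (hg.contDiff k).comp (hf.contDiff k)
  bound i hi := by
    obtain ⟨C, hC₁, p, hC⟩ := hg.exists_uniform_bound i
    obtain ⟨D, hD₁, p', hD⟩ := hf.exists_uniform_bound i
    refine ⟨i.factorial * C * D ^ i, p + p' * i, fun k x => ?_⟩
    have hk : (1 : ℝ) ≤ k + 1 := by simp
    have hDk : 1 ≤ D * ((k : ℝ) + 1) ^ p' := one_le_mul_of_one_le_of_one_le hD₁ (one_le_pow₀ hk)
    -- Subtracting `g k (f k x)` makes the bound available at order `0` as well.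
    rw [← iteratedFDeriv_sub_const ((hg.contDiff k).comp (hf.contDiff k)) (g k (f k x)) hi]
    refine (norm_iteratedFDeriv_comp_le (g := fun y => g k y - g k (f k x)) (f := f k) (N := ∞)
      ((hg.contDiff k).sub contDiff_const) (hf.contDiff k) (by exact_mod_cast le_top) x
      (C := C * ((k : ℝ) + 1) ^ p) (D := D * ((k : ℝ) + 1) ^ p') (fun j hj => ?_)
      fun j hj hji => ?_).trans_eq (by ring)
    · rcases eq_or_ne j 0 with rfl | hj₀
      · simpa using by positivity
      · rw [iteratedFDeriv_sub_const (hg.contDiff k) _ hj₀]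
        exact hC j hj₀ hj k _
    · exact (hD j (by omega) hji k x).trans (le_self_pow₀ hDk (by omega))

lemma add {g f : ℕ → E → F} (hg : PolyBoundedDerivs g) (hf : PolyBoundedDerivs f) :
    PolyBoundedDerivs fun k => g k + f k where
  contDiff k := (hg.contDiff k).add (hf.contDiff k)
  bound i hi := by
    obtain ⟨C, hC₁, p, hC⟩ := hg.exists_uniform_bound i
    obtain ⟨D, hD₁, p', hD⟩ := hf.exists_uniform_bound i
    refine ⟨C + D, p + p', fun k x => ?_⟩
    have hk : (1 : ℝ) ≤ k + 1 := by simp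
    rw [iteratedFDeriv_add ((hg.contDiff k).of_le (by exact_mod_cast le_top))
      ((hf.contDiff k).of_le (by exact_mod_cast le_top)), Pi.add_apply, add_mul]
    refine (norm_add_le _ _).trans (add_le_add ?_ ?_)
    · exact (hC i hi le_rfl k x).trans (by gcongr; omega)
    · exact (hD i hi le_rfl k x).trans (by gcongr; omega)

lemma smul {f : ℕ → E → F} (hf : PolyBoundedDerivs f) {c : ℕ → ℝ}
    (hc : ∀ k : ℕ, |c k| ≤ k + 1) : PolyBoundedDerivs fun k => c k • f k where
  contDiff k := contDiff_const.smul (hf.contDiff k)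
  bound i hi := by
    obtain ⟨C, p, hC⟩ := hf.bound i hi
    refine ⟨C, p + 1, fun k x => ?_⟩
    rw [iteratedFDeriv_const_smul_apply ((hf.contDiff k).contDiffAt.of_le
      (by exact_mod_cast le_top)), norm_smul, Real.norm_eq_abs]
    calc |c k| * ‖iteratedFDeriv ℝ i (f k) x‖ ≤ (k + 1) * (C * ((k : ℝ) + 1) ^ p) :=
          mul_le_mul (hc k) (hC k x) (norm_nonneg _) (by positivity)
      _ = C * ((k : ℝ) + 1) ^ (p + 1) := by ring

lemma eventually_norm_iteratedFDeriv_translate_sub_le {g : ℕ → F → G} {f : ℕ → E → F}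
    (hg : PolyBoundedDerivs g) (hf : PolyBoundedDerivs f) (n : ℕ) :
    ∀ᶠ k : ℕ in atTop, ∀ a b : F, ‖a - b‖ ≤ (1 / 2) ^ k → ∀ i ≤ n, ∀ x,
      ‖iteratedFDeriv ℝ i (fun y => g k (f k y + a) - g k (f k y + b)) x‖ ≤ (1 / 2) ^ n := by
  obtain ⟨C, hC₁, p, hC⟩ := hg.exists_uniform_bound (n + 1)
  obtain ⟨D, hD₁, p', hD⟩ := hf.exists_uniform_bound n
  have hlim : ∀ᶠ k : ℕ in atTop,
      n.factorial * (C * ((k : ℝ) + 1) ^ p * (1 / 2) ^ k) * (D * ((k : ℝ) + 1) ^ p') ^ n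
        ≤ (1 / 2) ^ n := by
    have h0 := ((tendsto_pow_const_mul_const_pow_of_abs_lt_one (p + p' * n)
      (r := 1 / 2) (by norm_num [abs_of_pos])).comp (tendsto_add_atTop_nat 1)).const_mul
      (2 * n.factorial * C * D ^ n)
    rw [mul_zero] at h0
    filter_upwards [h0.eventually_le_const (u := (1 / 2 : ℝ) ^ n) (by positivity)] with k hk
    refine le_of_eq_of_le ?_ hk
    simp only [Function.comp_apply, Nat.cast_add, Nat.cast_one]
    ring
  filter_upwards [hlim] with k hk a b hab i hi x
  have hk₁ : (1 : ℝ) ≤ k + 1 := by simp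
  have hDk : 1 ≤ D * ((k : ℝ) + 1) ^ p' := one_le_mul_of_one_le_of_one_le hD₁ (one_le_pow₀ hk₁)
  have hgt (c : F) : ContDiff ℝ ∞ fun u => g k (u + c) :=
    (hg.contDiff k).comp (contDiff_id.add contDiff_const)
  refine (norm_iteratedFDeriv_comp_le (g := fun u => g k (u + a) - g k (u + b)) (f := f k)
    (N := ∞) ((hgt a).sub (hgt b)) (hf.contDiff k) (by exact_mod_cast le_top) x
    (C := C * ((k : ℝ) + 1) ^ p * (1 / 2) ^ k) (D := D * ((k : ℝ) + 1) ^ p') (fun j hj => ?_)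
    fun j hj hji => ?_).trans (le_trans ?_ hk)
  · refine (norm_iteratedFDeriv_translate_sub_le (hg.contDiff k)
      (fun y => hC (j + 1) (by omega) (by omega) k y) a b (f k x)).trans ?_
    gcongr
  · exact (hD j (by omega) (hji.trans hi) k x).trans (le_self_pow₀ hDk (by omega))
  · gcongr

end PolyBoundedDerivs

end Derivatives

section Shears

/-- The vertical shear `(x, y) ↦ (x, y + f x)`. -/
def vShear (f : ℝ → ℝ) : Equiv.Perm (ℝ × ℝ) where
  toFun p := (p.1, p.2 + f p.1)
  invFun p := (p.1, p.2 + -f p.1)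
  left_inv p := by simp
  right_inv p := by simp

/-- The horizontal shear `(x, y) ↦ (x + f y, y)`. -/
def hShear (f : ℝ → ℝ) : Equiv.Perm (ℝ × ℝ) where
  toFun p := (p.1 + f p.2, p.2)
  invFun p := (p.1 + -f p.2, p.2)
  left_inv p := by simp
  right_inv p := by simp

/-- The lift of the rotation of the first coordinate of `𝕋²` by `t`. -/
def rot (t : ℝ) : Equiv.Perm (ℝ × ℝ) := hShear fun _ => t

variable {f : ℝ → ℝ}

lemma vShear_apply (p : ℝ × ℝ) : vShear f p = (p.1, p.2 + f p.1) := rfl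

lemma hShear_apply (p : ℝ × ℝ) : hShear f p = (p.1 + f p.2, p.2) := rfl

lemma rot_apply (t : ℝ) (p : ℝ × ℝ) : rot t p = p + (t, 0) :=
  Prod.ext rfl (add_zero p.2).symm

lemma rot_add (s t : ℝ) : rot (s + t) = rot s * rot t :=
  Equiv.ext fun p => Prod.ext (by simp only [rot, hShear_apply, Equiv.Perm.mul_apply]; ring) rfl

lemma commute_rot_hShear (t : ℝ) : Commute (rot t) (hShear f) :=
  Equiv.ext fun p => Prod.ext (add_right_comm p.1 (f p.2) t) rfl

lemma commute_rot_vShear {t : ℝ} (hf : Function.Periodic f t) : Commute (rot t) (vShear f) :=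
  Equiv.ext fun p => Prod.ext rfl (congrArg (p.2 + ·) (hf p.1).symm)

lemma exists_continuous_circle_lift (hper : Function.Periodic f 1) (hf : Continuous f) :
    ∃ g : Torus1 → Torus1, Continuous g ∧ ∀ x : ℝ, g x = f x := by
  have hp : Function.Periodic (fun x => (f x : Torus1)) 1 := fun x => congrArg _ (hper x)
  exact ⟨hp.lift, continuous_quot_lift _ ((AddCircle.continuous_mk' 1).comp hf), hp.lift_coe⟩

lemma measurePreserving_prod_add {α G : Type*} [MeasurableSpace α] [MeasurableSpace G] [AddGroup G]
    [MeasurableAdd₂ G] {μ : Measure α} {ν : Measure G} [SFinite μ] [SFinite ν]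
    [ν.IsAddRightInvariant] {g : α → G} (hg : Measurable g) :
    MeasurePreserving (fun z : α × G => (z.1, z.2 + g z.1)) (μ.prod ν) (μ.prod ν) :=
  (MeasurePreserving.id μ).skew_product (g := fun a c => c + g a)
    (measurable_snd.add (hg.comp measurable_fst))
    (.of_forall fun a => (measurePreserving_add_right ν (g a)).map_eq)

lemma isVolumeLift_vShear (hper : Function.Periodic f 1) (hf : ContDiff ℝ ∞ f) :
    IsVolumeLift (vShear f) := by
  have heq : IntEquivariant (vShear f) := fun p m n => by
    have := hper.int_mul m p.1
    rw [mul_one] at this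
    simp only [vShear_apply, Prod.fst_add, Prod.snd_add, this, Prod.ext_iff, add_right_comm,
      and_self]
  refine ⟨heq, contDiff_fst.prodMk (contDiff_snd.add (hf.comp contDiff_fst)),
    contDiff_fst.prodMk (contDiff_snd.add (hf.neg.comp contDiff_fst)), ?_⟩
  obtain ⟨g, hg, hgf⟩ := exists_continuous_circle_lift hper hf.continuous
  have hdesc : descend (vShear f) = fun z : Torus2 => (z.1, z.2 + g z.1) := by
    funext z
    obtain ⟨p, rfl⟩ := torusProj_surjective z
    rw [heq.descend_torusProj]
    simp only [torusProj, vShear_apply, AddCircle.coe_add, hgf]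
  exact hdesc ▸ measurePreserving_prod_add hg.measurable

lemma isVolumeLift_hShear (hper : Function.Periodic f 1) (hf : ContDiff ℝ ∞ f) :
    IsVolumeLift (hShear f) := by
  have heq : IntEquivariant (hShear f) := fun p m n => by
    have := hper.int_mul n p.2
    rw [mul_one] at this
    simp only [hShear_apply, Prod.fst_add, Prod.snd_add, this, Prod.ext_iff, add_right_comm,
      and_self]
  refine ⟨heq, (contDiff_fst.add (hf.comp contDiff_snd)).prodMk contDiff_snd,
    (contDiff_fst.add (hf.neg.comp contDiff_snd)).prodMk contDiff_snd, ?_⟩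
  have hswap : MeasurePreserving (Prod.swap : Torus2 → Torus2) volume volume :=
    Measure.measurePreserving_swap
  have hdesc : descend (hShear f) = Prod.swap ∘ descend (vShear f) ∘ Prod.swap := by
    funext z
    obtain ⟨p, rfl⟩ := torusProj_surjective z
    rw [heq.descend_torusProj]
    exact congrArg Prod.swap
      ((isVolumeLift_vShear hper hf).equivariant.descend_torusProj p.swap).symm
  exact hdesc ▸ hswap.comp ((isVolumeLift_vShear hper hf).measurePreserving.comp hswap)

lemma isVolumeLift_rot (t : ℝ) : IsVolumeLift (rot t) :=
  isVolumeLift_hShear (fun _ => rfl) contDiff_const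

lemma PolyBoundedDerivs.vShear {f : ℕ → ℝ → ℝ} (hf : PolyBoundedDerivs f) :
    PolyBoundedDerivs fun k => ⇑(vShear (f k)) := by
  convert (clm (.id ℝ (ℝ × ℝ))).add ((clm (.inr ℝ ℝ ℝ)).comp (hf.comp (clm (.fst ℝ ℝ ℝ))))
    using 2 with k
  funext p
  simp [vShear_apply, Prod.ext_iff]

lemma PolyBoundedDerivs.hShear {f : ℕ → ℝ → ℝ} (hf : PolyBoundedDerivs f) :
    PolyBoundedDerivs fun k => ⇑(hShear (f k)) := by
  convert (clm (.id ℝ (ℝ × ℝ))).add ((clm (.inl ℝ ℝ ℝ)).comp (hf.comp (clm (.snd ℝ ℝ ℝ))))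
    using 2 with k
  funext p
  simp [hShear_apply, Prod.ext_iff]

end Shears

section Sawtooth

open Real (smoothTransition)

lemma contDiff_comp_fract {F : Type*} [NormedAddCommGroup F] [NormedSpace ℝ F] {ρ : ℝ → F}
    {n : WithTop ℕ∞} (hρ : ContDiff ℝ n ρ) (hper : ∀ᶠ t in 𝓝 (0 : ℝ), ρ (t + 1) = ρ t) :
    ContDiff ℝ n fun x => ρ (Int.fract x) := by
  refine contDiff_iff_contDiffAt.2 fun x => ?_
  have hshift : ContDiff ℝ n (ρ ∘ fun t : ℝ => t - (⌊x⌋ : ℝ)) :=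
    hρ.comp (contDiff_id.sub contDiff_const)
  refine hshift.contDiffAt.congr_of_eventuallyEq ?_
  have hlt : ∀ᶠ t in 𝓝 x, t < (⌊x⌋ : ℝ) + 1 := gt_mem_nhds (Int.lt_floor_add_one x)
  rcases (Int.floor_le x).eq_or_lt with hx | hx
  · have hsub : Tendsto (fun t => t - (⌊x⌋ : ℝ)) (𝓝 x) (𝓝 0) :=
      (continuous_id.sub continuous_const).tendsto' x 0 (sub_eq_zero.2 hx.symm)
    have hgt : ∀ᶠ t in 𝓝 x, (⌊x⌋ : ℝ) - 1 ≤ t := le_mem_nhds (by linarith)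
    filter_upwards [hlt, hgt, hsub.eventually hper] with t ht ht' hρt
    rcases le_or_gt (⌊x⌋ : ℝ) t with h | h
    · rw [Function.comp_apply, Int.fract, Int.floor_eq_iff.2 ⟨h, ht⟩]
    · have hfl : ⌊t⌋ = ⌊x⌋ - 1 := Int.floor_eq_iff.2
        ⟨by push_cast; exact ht', by push_cast; linarith⟩
      rw [Function.comp_apply, Int.fract, hfl, ← hρt]
      push_cast
      ring_nf
  · filter_upwards [hlt, lt_mem_nhds hx] with t ht ht'
    rw [Function.comp_apply, Int.fract, Int.floor_eq_iff.2 ⟨ht'.le, ht⟩]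

/-- A smooth `1`-periodic modification of the fractional part, equal to it on `[η, 1 - η]` and cut
off to `0` near the integers. -/
def smoothSawtooth (η x : ℝ) : ℝ :=
  Int.fract x * (smoothTransition (2 * Int.fract x / η - 1) *
    smoothTransition (2 * (1 - Int.fract x) / η - 1))

variable {η : ℝ}

lemma smoothSawtooth_periodic (η : ℝ) : Function.Periodic (smoothSawtooth η) 1 := fun x => by
  simp only [smoothSawtooth, Int.fract_add_one]

lemma contDiff_smoothSawtooth (hη : 0 < η) : ContDiff ℝ ∞ (smoothSawtooth η) := by
  refine contDiff_comp_fract (ρ := fun t => t * (smoothTransition (2 * t / η - 1) *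
    smoothTransition (2 * (1 - t) / η - 1))) ?_ ?_
  · exact contDiff_id.mul ((Real.smoothTransition.contDiff.comp (by fun_prop)).mul
      (Real.smoothTransition.contDiff.comp (by fun_prop)))
  · filter_upwards [Ioo_mem_nhds (show -(η / 2) < 0 by linarith) (half_pos hη)] with t ht
    rw [Real.smoothTransition.zero_of_nonpos (x := 2 * (1 - (t + 1)) / η - 1),
      Real.smoothTransition.zero_of_nonpos (x := 2 * t / η - 1)]
    · ring
    · rw [sub_nonpos, div_le_one hη]; linarith [ht.2]
    · rw [sub_nonpos, div_le_one hη]; linarith [ht.1]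

lemma smoothSawtooth_nonneg (η x : ℝ) : 0 ≤ smoothSawtooth η x :=
  mul_nonneg (Int.fract_nonneg x)
    (mul_nonneg (smoothTransition.nonneg _) (smoothTransition.nonneg _))

lemma smoothSawtooth_le_one (η x : ℝ) : smoothSawtooth η x ≤ 1 :=
  mul_le_one₀ (Int.fract_lt_one x).le
    (mul_nonneg (smoothTransition.nonneg _) (smoothTransition.nonneg _))
    (mul_le_one₀ (smoothTransition.le_one _) (smoothTransition.nonneg _)
      (smoothTransition.le_one _))

lemma smoothSawtooth_eq_fract (hη : 0 < η) {x : ℝ} (hx : Int.fract x ∈ Icc η (1 - η)) :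
    smoothSawtooth η x = Int.fract x := by
  rw [smoothSawtooth, smoothTransition.one_of_one_le, smoothTransition.one_of_one_le, mul_one,
    mul_one]
  all_goals rw [le_sub_iff_add_le, le_div_iff₀ hη]; linarith [hx.1, hx.2]

lemma coe_smoothSawtooth (hη : 0 < η) {x : ℝ} (hx : η ≤ ‖(x : Torus1)‖) :
    (smoothSawtooth η x : Torus1) = x := by
  rw [UnitAddCircle.norm_eq, abs_sub_round_eq_min, le_min_iff] at hx
  rw [smoothSawtooth_eq_fract hη ⟨hx.1, by linarith [hx.2]⟩, Torus1.coe_eq_coe_iff]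
  exact ⟨-⌊x⌋, by rw [Int.cast_neg, ← sub_eq_add_neg, Int.self_sub_floor]⟩

lemma exists_norm_iteratedFDeriv_smoothSawtooth_le (hη : 0 < η) (i : ℕ) :
    ∃ C, ∀ x, ‖iteratedFDeriv ℝ i (smoothSawtooth η) x‖ ≤ C := by
  have hper : Function.Periodic (iteratedFDeriv ℝ i (smoothSawtooth η)) 1 := fun x => by
    rw [← iteratedFDeriv_comp_add_right, funext (smoothSawtooth_periodic η)]
  obtain ⟨C, hC⟩ := (hper.isBounded_of_continuous one_ne_zero
    ((contDiff_smoothSawtooth hη).continuous_iteratedFDeriv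
      (by exact_mod_cast le_top))).exists_norm_le
  exact ⟨C, fun x => hC _ (mem_range_self x)⟩

end Sawtooth

section ScaledSawtooth

/-- The profile `x ↦ c s(m x)` of the shears of the construction, where `s` is the smoothed
sawtooth. -/
def scaledSawtooth (η c : ℝ) (m : ℕ) (x : ℝ) : ℝ := c * smoothSawtooth η (m * x)

variable {η c : ℝ} {m : ℕ}

lemma neg_scaledSawtooth (η c : ℝ) (m : ℕ) : -scaledSawtooth η c m = scaledSawtooth η (-c) m :=
  funext fun _ => (neg_mul _ _).symm

lemma scaledSawtooth_periodic (hm : 0 < m) (n : ℤ) :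
    Function.Periodic (scaledSawtooth η c m) (n / m) := fun x => by
  have hm' : (m : ℝ) ≠ 0 := Nat.cast_ne_zero.2 hm.ne'
  have := (smoothSawtooth_periodic η).int_mul n (m * x)
  rw [mul_one] at this
  rw [scaledSawtooth, mul_add, mul_div_cancel₀ _ hm', this, scaledSawtooth]

lemma scaledSawtooth_periodic_one (hm : 0 < m) : Function.Periodic (scaledSawtooth η c m) 1 := by
  have hm' : (m : ℝ) ≠ 0 := Nat.cast_ne_zero.2 hm.ne'
  simpa only [Int.cast_natCast, div_self hm'] using scaledSawtooth_periodic (η := η) (c := c) hm m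

lemma contDiff_scaledSawtooth (hη : 0 < η) : ContDiff ℝ ∞ (scaledSawtooth η c m) :=
  contDiff_const.mul ((contDiff_smoothSawtooth hη).comp (contDiff_const.mul contDiff_id))

lemma scaledSawtooth_mem_Icc (hc : 0 ≤ c) (x : ℝ) : scaledSawtooth η c m x ∈ Icc 0 c :=
  ⟨mul_nonneg hc (smoothSawtooth_nonneg _ _),
    mul_le_of_le_one_right hc (smoothSawtooth_le_one _ _)⟩

lemma polyBoundedDerivs_scaledSawtooth (hη : 0 < η) {c : ℕ → ℝ} (hc : ∀ k : ℕ, |c k| ≤ k + 1)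
    (m : ℕ) : PolyBoundedDerivs fun k => scaledSawtooth η (c k) m :=
  ((PolyBoundedDerivs.const (contDiff_smoothSawtooth hη)
    fun i _ => exists_norm_iteratedFDeriv_smoothSawtooth_le hη i).smul hc).comp
    (.clm ((m : ℝ) • .id ℝ ℝ))

lemma exists_lipschitz_scaledSawtooth (hη : 0 < η) :
    ∃ C : ℝ, 1 ≤ C ∧ ∀ (c : ℝ) (m : ℕ) (x y : ℝ),
      |scaledSawtooth η c m x - scaledSawtooth η c m y| ≤ |c| * m * C * |x - y| := by
  obtain ⟨C, hC⟩ := exists_norm_iteratedFDeriv_smoothSawtooth_le hη 1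
  refine ⟨max C 1, le_max_right _ _, fun c m x y => ?_⟩
  have h := dist_le_mul_of_norm_iteratedFDeriv_one_le (contDiff_smoothSawtooth hη)
    (fun z => (hC z).trans (le_max_left C 1)) (m * x) (m * y)
  rw [Real.dist_eq, Real.dist_eq, ← mul_sub, abs_mul, Nat.abs_cast] at h
  calc |scaledSawtooth η c m x - scaledSawtooth η c m y|
      = |c| * |smoothSawtooth η (m * x) - smoothSawtooth η (m * y)| := by
        rw [← abs_mul, mul_sub, scaledSawtooth, scaledSawtooth]
    _ ≤ |c| * (max C 1 * (m * |x - y|)) := by gcongr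
    _ = |c| * m * max C 1 * |x - y| := by ring

end ScaledSawtooth

/-- A stage of the Anosov–Katok construction: a volume-preserving change of coordinates `H` of
`𝕋²`, given by its lift, and a rotation angle `a / q`. It encodes the periodic diffeomorphism which
in the coordinates `H` is the rotation of the first coordinate by `a / q`. -/
structure Stage where
  H : Equiv.Perm (ℝ × ℝ)
  isVolumeLift : IsVolumeLift H
  q : ℕ
  q_pos : 0 < q
  a : ℤ

namespace Stage

variable (S : Stage)

/-- The rotation number of a stage. -/
def angle : ℝ := S.a / S.q

/-- The horizontal flow in the coordinates `H`; the diffeomorphism of the stage is its time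
`S.angle` map. -/
def flow (t : ℝ) : Equiv.Perm (ℝ × ℝ) := S.H * rot t * S.H⁻¹

lemma flow_apply (t : ℝ) (p : ℝ × ℝ) : S.flow t p = S.H (S.H.symm p + (t, 0)) :=
  congrArg S.H (rot_apply t _)

lemma flow_symm (t : ℝ) : (S.flow t).symm = S.flow (-t) := Equiv.ext fun _ => rfl

lemma flow_add (s t : ℝ) : S.flow (s + t) = S.flow s * S.flow t := by
  rw [flow, rot_add, flow, flow]
  group

lemma flow_zero : S.flow 0 = 1 := by
  simpa only [add_zero, left_eq_mul] using S.flow_add 0 0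

lemma iterate_flow (t : ℝ) (i : ℕ) : (S.flow t)^[i] = S.flow (i * t) := by
  induction i with
  | zero => rw [Nat.cast_zero, zero_mul, flow_zero]; rfl
  | succ i ih =>
    rw [Function.iterate_succ', ih, ← Equiv.Perm.coe_mul, ← flow_add]
    push_cast
    ring_nf

lemma isVolumeLift_flow (t : ℝ) : IsVolumeLift (S.flow t) :=
  (S.isVolumeLift.mul (isVolumeLift_rot t)).mul S.isVolumeLift.inv

/-- The coordinates `H` followed by a vertical shear of slope about `k q`, which commutes with the
rotation by `1 / q`. -/
def twist (η : ℝ) (k : ℕ) : Equiv.Perm (ℝ × ℝ) := S.H * vShear (scaledSawtooth η k S.q)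

variable {η : ℝ}

lemma isVolumeLift_twist (hη : 0 < η) (k : ℕ) : IsVolumeLift (S.twist η k) :=
  S.isVolumeLift.mul
    (isVolumeLift_vShear (scaledSawtooth_periodic_one S.q_pos) (contDiff_scaledSawtooth hη))

/-- The stage following `S`. On most of the torus the two shears compose to a linear map sending
the circles `{x} × 𝕋` to curves which `S.H` contracts, and the angle is moved by `1 / (q 4ᵏ)`. -/
def next (hη : 0 < η) (k : ℕ) : Stage where
  H := S.twist η k * (hShear (scaledSawtooth η (1 / (k * S.q)) 1))⁻¹
  isVolumeLift := (S.isVolumeLift_twist hη k).mul (isVolumeLift_hShear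
    (scaledSawtooth_periodic_one one_pos) (contDiff_scaledSawtooth hη)).inv
  q := S.q * 4 ^ k
  q_pos := by have := S.q_pos; positivity
  a := S.a * 4 ^ k + 1

variable (hη : 0 < η) (k : ℕ)

lemma angle_next : (S.next hη k).angle = S.angle + 1 / (S.q * 4 ^ k) := by
  have : (S.q : ℝ) ≠ 0 := Nat.cast_ne_zero.2 S.q_pos.ne'
  simp only [angle, next]
  push_cast
  field_simp

lemma flow_next (t : ℝ) : (S.next hη k).flow t = S.twist η k * rot t * (S.twist η k)⁻¹ := by
  rw [flow, next, mul_inv_rev, inv_inv, mul_assoc (S.twist η k),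
    ← (commute_rot_hShear t).inv_right.eq]
  group

lemma flow_next_mul_angle (m : ℤ) : (S.next hη k).flow (m * S.angle) = S.flow (m * S.angle) := by
  have hper : Function.Periodic (scaledSawtooth η k S.q) (m * S.angle) := by
    rw [angle, ← mul_div_assoc, ← Int.cast_mul]
    exact scaledSawtooth_periodic S.q_pos _
  rw [flow_next, flow, twist, mul_assoc S.H, ← (commute_rot_vShear hper).eq]
  group

lemma next_H_symm_fst (p : ℝ × ℝ) : ((S.next hη k).H.symm p).1 =
    (S.H.symm p).1 + scaledSawtooth η (1 / (k * S.q)) 1 ((S.next hη k).H.symm p).2 := rfl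

lemma next_H_symm_snd (p : ℝ × ℝ) : ((S.next hη k).H.symm p).2 =
    (S.H.symm p).2 - scaledSawtooth η k S.q (S.H.symm p).1 := (sub_eq_add_neg _ _).symm

lemma abs_next_H_symm_fst_sub_le (p : ℝ × ℝ) :
    |((S.next hη k).H.symm p).1 - (S.H.symm p).1| ≤ 1 / (k * S.q) := by
  have hmem := scaledSawtooth_mem_Icc (η := η) (c := 1 / (k * S.q)) (m := 1) (by positivity)
    ((S.next hη k).H.symm p).2
  rw [next_H_symm_fst, add_sub_cancel_left, abs_of_nonneg hmem.1]
  exact hmem.2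

lemma abs_inv_mul_le (k q : ℕ) : |1 / ((k : ℝ) * q)| ≤ k + 1 := by
  rw [abs_of_nonneg (by positivity), one_div, ← Nat.cast_mul]
  exact (Nat.cast_inv_le_one _).trans (le_add_of_nonneg_left k.cast_nonneg)

lemma polyBoundedDerivs_next_H : PolyBoundedDerivs fun k => ⇑(S.next hη k).H := by
  have hA := polyBoundedDerivs_scaledSawtooth hη (c := fun k => k) (fun k => by simp) S.q
  have hB := polyBoundedDerivs_scaledSawtooth hη (c := fun k => -(1 / (k * S.q)))
    (fun k => (abs_neg _).trans_le (abs_inv_mul_le k S.q)) 1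
  simp only [← neg_scaledSawtooth] at hB
  exact ((PolyBoundedDerivs.const S.isVolumeLift.contDiff fun _ =>
    S.isVolumeLift.equivariant.exists_norm_iteratedFDeriv_le S.isVolumeLift.contDiff).comp
      hA.vShear).comp hB.hShear

lemma polyBoundedDerivs_next_H_symm : PolyBoundedDerivs fun k => ⇑(S.next hη k).H.symm := by
  have hA := polyBoundedDerivs_scaledSawtooth hη (c := fun k => -k) (fun k => by simp) S.q
  have hB := polyBoundedDerivs_scaledSawtooth hη (c := fun k => 1 / (k * S.q))
    (fun k => abs_inv_mul_le k S.q) 1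
  simp only [← neg_scaledSawtooth] at hA
  exact hB.hShear.comp (hA.vShear.comp (.const S.isVolumeLift.contDiff_symm fun _ =>
    S.isVolumeLift.equivariant_symm.exists_norm_iteratedFDeriv_le S.isVolumeLift.contDiff_symm))

lemma abs_mul_angle_next_sub_le {m : ℤ} (hm : |m| ≤ 2 ^ k) :
    |m * (S.next hη k).angle - m * S.angle| ≤ (1 / 2) ^ k := by
  have hq : (1 : ℝ) ≤ S.q := Nat.one_le_cast.2 S.q_pos
  have hm' : |(m : ℝ)| ≤ 2 ^ k := by exact_mod_cast hm
  rw [angle_next, ← mul_sub, add_sub_cancel_left, abs_mul,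
    abs_of_nonneg (a := 1 / ((S.q : ℝ) * 4 ^ k)) (by positivity)]
  calc |(m : ℝ)| * (1 / (S.q * 4 ^ k)) ≤ 2 ^ k * (1 / (1 * 4 ^ k)) := by gcongr
    _ = (1 / 2) ^ k := by
      rw [one_mul, mul_one_div, ← div_pow]
      norm_num

lemma eventually_norm_iteratedFDeriv_flow_next_sub_le (n : ℕ) :
    ∀ᶠ k in atTop, ∀ m : ℤ, |m| ≤ 2 ^ k → ∀ i ≤ n, ∀ p,
      ‖iteratedFDeriv ℝ i (fun y => (S.next hη k).flow (m * (S.next hη k).angle) y -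
        S.flow (m * S.angle) y) p‖ ≤ (1 / 2) ^ n := by
  filter_upwards [(S.polyBoundedDerivs_next_H hη).eventually_norm_iteratedFDeriv_translate_sub_le
    (S.polyBoundedDerivs_next_H_symm hη) n] with k hk m hm i hi p
  simp only [← S.flow_next_mul_angle hη k m, flow_apply]
  refine hk _ _ ?_ i hi p
  rw [Prod.mk_sub_mk, sub_self, Prod.norm_mk, norm_zero, max_eq_left (norm_nonneg _)]
  exact S.abs_mul_angle_next_sub_le hη k hm

end Stage

section Grids

lemma exists_finset_abs_sub_add_int_lt {δ : ℝ} (hδ : 0 < δ) (hδ1 : δ ≤ 1) :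
    ∃ F : Finset ℝ, (F.card : ℝ) ≤ 2 / δ ∧ ∀ x, ∃ w ∈ F, ∃ m : ℤ, |x - (w + m)| < δ := by
  set N := ⌊1 / δ⌋₊ + 1 with hN
  have hN0 : (0 : ℝ) < N := by positivity
  have hNδ : 1 < N * δ := by
    rw [← div_lt_iff₀ hδ, hN]
    exact_mod_cast Nat.lt_floor_add_one (1 / δ)
  refine ⟨(Finset.range N).image fun j : ℕ => (j / N : ℝ), ?_, fun x => ?_⟩
  · calc (((Finset.range N).image fun j : ℕ => (j / N : ℝ)).card : ℝ) ≤ N := by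
          exact_mod_cast Finset.card_image_le.trans (Finset.card_range N).le
      _ ≤ 1 / δ + 1 / δ := by
          rw [hN, Nat.cast_add, Nat.cast_one]
          exact add_le_add (Nat.floor_le (by positivity)) (one_le_one_div hδ hδ1)
      _ = 2 / δ := by ring
  · have h0 : 0 ≤ Int.fract x * N := mul_nonneg (Int.fract_nonneg x) hN0.le
    have hlt : ⌊Int.fract x * N⌋₊ < N :=
      (Nat.floor_lt h0).2 (mul_lt_of_lt_one_left hN0 (Int.fract_lt_one x))
    refine ⟨_, Finset.mem_image_of_mem _ (Finset.mem_range.2 hlt), ⌊x⌋, ?_⟩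
    rw [add_comm, ← sub_sub, Int.self_sub_floor, abs_lt, lt_sub_iff_add_lt, sub_lt_iff_lt_add',
      ← sub_eq_neg_add, sub_lt_iff_lt_add]
    have h1 := Nat.floor_le h0
    have h2 := Nat.lt_floor_add_one (Int.fract x * N)
    have hdiv := div_mul_cancel₀ (⌊Int.fract x * N⌋₊ : ℝ) hN0.ne'
    constructor <;> refine lt_of_mul_lt_mul_right ?_ hN0.le <;> rw [add_mul, hdiv] <;> linarith

lemma exists_finset_forall_dist_lt {X : Type*} [PseudoMetricSpace X] {Φ : ℝ × ℝ → X} {A B ε : ℝ}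
    (hper : ∀ u (m n : ℤ), Φ (u + ((m : ℝ), (n : ℝ))) = Φ u)
    (hΦ : ∀ u v, dist (Φ u) (Φ v) ≤ A * |u.1 - v.1| + B * |u.2 - v.2|)
    (hA : 1 ≤ A) (hB : 1 ≤ B) (hε : 0 < ε) (hε1 : ε ≤ 1) :
    ∃ F : Finset (ℝ × ℝ), (F.card : ℝ) ≤ 16 * A * B / ε ^ 2 ∧
      ∀ u, ∃ w ∈ F, ∀ t : ℝ, dist (Φ (u + (t, 0))) (Φ (w + (t, 0))) < ε := by
  have : 0 < A := zero_lt_one.trans_le hA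
  have : 0 < B := zero_lt_one.trans_le hB
  obtain ⟨F, hF, hFd⟩ := exists_finset_abs_sub_add_int_lt (δ := ε / (2 * A)) (by positivity)
    (by rw [div_le_one (by positivity)]; linarith)
  obtain ⟨G, hG, hGd⟩ := exists_finset_abs_sub_add_int_lt (δ := ε / (2 * B)) (by positivity)
    (by rw [div_le_one (by positivity)]; linarith)
  refine ⟨F ×ˢ G, ?_, fun u => ?_⟩
  · rw [Finset.card_product, Nat.cast_mul]
    calc (F.card * G.card : ℝ) ≤ 2 / (ε / (2 * A)) * (2 / (ε / (2 * B))) := by gcongr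
      _ = 16 * A * B / ε ^ 2 := by field_simp; norm_num
  · obtain ⟨w₁, hw₁, m, hm⟩ := hFd u.1
    obtain ⟨w₂, hw₂, n, hn⟩ := hGd u.2
    refine ⟨(w₁, w₂), Finset.mk_mem_product hw₁ hw₂, fun t => ?_⟩
    rw [← hper ((w₁, w₂) + (t, 0)) m n]
    refine (hΦ _ _).trans_lt ?_
    simp only [Prod.fst_add, Prod.snd_add, add_zero]
    rw [add_right_comm w₁, add_sub_add_right_eq_sub]
    calc A * |u.1 - (w₁ + m)| + B * |u.2 - (w₂ + n)|
        < A * (ε / (2 * A)) + B * (ε / (2 * B)) := by gcongr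
      _ = ε := by field_simp; norm_num

end Grids

namespace Stage

variable (S : Stage) {η : ℝ}

lemma flow_next_twist (hη : 0 < η) (k : ℕ) (t : ℝ) (u : ℝ × ℝ) :
    (S.next hη k).flow t (S.twist η k u) = S.twist η k (u + (t, 0)) := by
  rw [flow_next, Equiv.Perm.mul_apply, Equiv.Perm.mul_apply, Equiv.Perm.inv_def,
    Equiv.symm_apply_apply, rot_apply]

lemma exists_dist_twist_le (hη : 0 < η) : ∃ L : ℝ, 1 ≤ L ∧ ∀ (k : ℕ) (u v : ℝ × ℝ),
    dist (S.twist η k u) (S.twist η k v) ≤ L * (k + 1) * |u.1 - v.1| + L * |u.2 - v.2| := by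
  obtain ⟨C, hC1, hC⟩ := exists_lipschitz_scaledSawtooth hη
  obtain ⟨D, hD⟩ := S.isVolumeLift.equivariant.exists_norm_iteratedFDeriv_le
    S.isVolumeLift.contDiff one_ne_zero
  have hH := dist_le_mul_of_norm_iteratedFDeriv_one_le S.isVolumeLift.contDiff
    fun p => (hD p).trans (le_max_left D 1)
  have hD1 := le_max_right D 1
  have hqC : 1 ≤ S.q * C := one_le_mul_of_one_le_of_one_le (Nat.one_le_cast.2 S.q_pos) hC1
  refine ⟨max D 1 * (S.q * C), one_le_mul_of_one_le_of_one_le hD1 hqC, fun k u v => ?_⟩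
  have hf := hC k S.q u.1 v.1
  rw [Nat.abs_cast] at hf
  have hshear : dist (vShear (scaledSawtooth η k S.q) u) (vShear (scaledSawtooth η k S.q) v) ≤
      (S.q * C) * (k + 1) * |u.1 - v.1| + |u.2 - v.2| := by
    rw [vShear_apply, vShear_apply, Prod.dist_eq, Real.dist_eq, Real.dist_eq, add_sub_add_comm]
    have h0 := abs_nonneg (u.1 - v.1)
    refine max_le ?_ ((abs_add_le _ _).trans ?_)
    · nlinarith [abs_nonneg (u.2 - v.2), mul_nonneg (k.cast_nonneg (α := ℝ)) h0,
        mul_nonneg (mul_nonneg (k.cast_nonneg (α := ℝ)) h0) (zero_le_one.trans hqC)]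
    · nlinarith
  calc dist (S.twist η k u) (S.twist η k v)
      ≤ max D 1 * ((S.q * C) * (k + 1) * |u.1 - v.1| + |u.2 - v.2|) :=
        (hH _ _).trans (by gcongr)
    _ ≤ max D 1 * ((S.q * C) * (k + 1) * |u.1 - v.1| + S.q * C * |u.2 - v.2|) := by
        gcongr
        exact le_mul_of_one_le_left (abs_nonneg _) hqC
    _ = _ := by ring

lemma exists_card_le_forall_dist_flow_lt (hη : 0 < η) : ∃ C : ℝ, ∀ (k : ℕ) (ε : ℝ), 0 < ε → ε ≤ 1 →
    ∃ F : Finset (ℝ × ℝ), (F.card : ℝ) ≤ C * (k + 1) / ε ^ 2 ∧ ∀ p, ∃ w ∈ F, ∀ t,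
      dist (torusProj ((S.next hη k).flow t p)) (torusProj ((S.next hη k).flow t w)) < ε := by
  obtain ⟨L, hL1, hL⟩ := S.exists_dist_twist_le hη
  refine ⟨16 * L * L, fun k ε hε hε1 => ?_⟩
  have heq := (S.isVolumeLift_twist hη k).equivariant
  obtain ⟨F, hF, hFd⟩ := exists_finset_forall_dist_lt (Φ := torusProj ∘ S.twist η k)
    (A := L * (k + 1)) (fun u m n => by
      simp only [Function.comp_apply, heq u m n, torusProj_add_int])
    (fun u v => (dist_torusProj_le _ _).trans (hL k u v))
    (one_le_mul_of_one_le_of_one_le hL1 (by simp)) hL1 hε hε1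
  refine ⟨F.map (S.twist η k).toEmbedding, ?_, fun p => ?_⟩
  · rw [Finset.card_map]
    exact hF.trans_eq (by ring)
  · obtain ⟨w, hw, hd⟩ := hFd ((S.twist η k).symm p)
    refine ⟨_, Finset.mem_map_of_mem _ hw, fun t => ?_⟩
    rw [← (S.twist η k).apply_symm_apply p, Equiv.coe_toEmbedding, flow_next_twist,
      flow_next_twist]
    exact hd t

end Stage

lemma eventually_mul_add_one_le_pow (C : ℝ) {r : ℝ} (hr : 1 < r) :
    ∀ᶠ k : ℕ in atTop, C * (k + 1) ≤ r ^ k := by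
  have h := ((tendsto_pow_const_div_const_pow_of_one_lt 1 hr).add
    (tendsto_pow_const_div_const_pow_of_one_lt 0 hr)).const_mul C
  rw [add_zero, mul_zero] at h
  filter_upwards [h.eventually_le_const one_pos] with k hk
  have hrk : 0 < r ^ k := pow_pos (zero_lt_one.trans hr) k
  rwa [pow_one, pow_zero, ← add_div, ← mul_div_assoc, div_le_one hrk] at hk

-- At a maximum of `e` the increment over `d` is nonpositive, so the increments assume every value
-- between `0` and a given positive one.
lemma exists_sub_eq_of_periodic {e : ℝ → ℝ} {c d h t₀ : ℝ}
    (hper : Function.Periodic e c) (hc : c ≠ 0) (he : Continuous e) (hh : 0 ≤ h)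
    (h₀ : h ≤ e (t₀ + d) - e t₀) : ∃ t, e (t + d) - e t = h := by
  obtain ⟨_, ⟨t₁, rfl⟩, ht₁⟩ :=
    (hper.compact_of_continuous hc he).exists_isGreatest (range_nonempty e)
  refine mem_range_of_exists_le_of_exists_ge
    ((he.comp (continuous_add_const d)).sub he) ⟨t₁, ?_⟩ ⟨t₀, h₀⟩
  exact (sub_nonpos.2 (ht₁ (mem_range_self _))).trans hh

namespace Stage

variable (S : Stage) {η : ℝ}

/-- The height of the image of the horizontal circle under `S.twist η k`. Along the flow of the next
stage the height of the image of `(x, 0)` moves along this graph. -/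
def profile (η : ℝ) (k : ℕ) (x : ℝ) : ℝ := (S.twist η k (x, 0)).2

lemma periodic_profile (hη : 0 < η) (k : ℕ) : Function.Periodic (S.profile η k) 1 := fun x => by
  have h := congrArg Prod.snd ((S.isVolumeLift_twist hη k).equivariant (x, 0) 1 0)
  simpa only [profile, Prod.mk_add_mk, Int.cast_one, Int.cast_zero, add_zero, Prod.snd_add] using h

lemma continuous_profile (hη : 0 < η) (k : ℕ) : Continuous (S.profile η k) :=
  continuous_snd.comp ((S.isVolumeLift_twist hη k).contDiff.continuous.comp
    (continuous_id.prodMk continuous_const))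

lemma exists_abs_profile_sub_le (η : ℝ) :
    ∃ c, ∀ k x, |S.profile η k x - scaledSawtooth η k S.q x| ≤ c := by
  obtain ⟨c, hc⟩ := S.isVolumeLift.equivariant.exists_norm_sub_le S.isVolumeLift.contDiff.continuous
  refine ⟨c, fun k x => (le_trans ?_ (norm_snd_le _)).trans (hc (x, scaledSawtooth η k S.q x))⟩
  simp only [profile, twist, Equiv.Perm.mul_apply, vShear_apply, zero_add, Prod.snd_sub,
    Real.norm_eq_abs, le_refl]

lemma half_le_profile_sub (hη : 0 < η) (hη' : η ≤ 1 / 4) {k : ℕ} {c d : ℝ}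
    (hc : ∀ x, |S.profile η k x - scaledSawtooth η k S.q x| ≤ c) (hd : S.q * d ≤ 1 / 2)
    (hcd : 2 * c + 1 / 2 ≤ k * (S.q * d)) (hd0 : 0 ≤ d) :
    1 / 2 ≤ S.profile η k (η / S.q + d) - S.profile η k (η / S.q) := by
  have hq : (0 : ℝ) < S.q := Nat.cast_pos.2 S.q_pos
  have hsaw (y : ℝ) (hy0 : 0 ≤ y) (hy : S.q * y ≤ 1 / 2) :
      scaledSawtooth η k S.q (η / S.q + y) = k * (η + S.q * y) := by
    have hy0' : 0 ≤ S.q * y := by positivity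
    have hfract : Int.fract (η + S.q * y) = η + S.q * y :=
      Int.fract_eq_self.2 ⟨by linarith, by linarith⟩
    rw [scaledSawtooth, mul_add, mul_div_cancel₀ _ hq.ne', smoothSawtooth_eq_fract hη, hfract]
    rw [hfract]
    constructor <;> linarith
  have h1 := abs_le.1 (hc (η / S.q + d))
  have h2 := abs_le.1 (hc (η / S.q + 0))
  rw [hsaw d hd0 hd] at h1
  rw [hsaw 0 le_rfl (by norm_num), mul_zero, add_zero, add_zero] at h2
  linarith [h1.1, h2.2]

lemma exists_abs_mul_angle_next_sub_le (hη : 0 < η) (k : ℕ) (τ : ℝ) :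
    ∃ i ≤ (S.next hη k).q, ∃ m : ℤ, |i * (S.next hη k).angle - (τ + m)| ≤ 1 / 4 ^ k := by
  have hq : (S.q : ℝ) ≠ 0 := Nat.cast_ne_zero.2 S.q_pos.ne'
  have h4 : (0 : ℝ) < 4 ^ k := by positivity
  have h0 : 0 ≤ Int.fract τ * 4 ^ k := mul_nonneg (Int.fract_nonneg τ) h4.le
  set j := ⌊Int.fract τ * 4 ^ k⌋₊
  have hj : j < 4 ^ k := (Nat.floor_lt h0).2 <| by
    exact_mod_cast mul_lt_of_lt_one_left h4 (Int.fract_lt_one τ)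
  refine ⟨S.q * j, Nat.mul_le_mul_left _ hj.le, j * S.a - ⌊τ⌋, ?_⟩
  have hdiff : ((S.q * j : ℕ) : ℝ) * (S.next hη k).angle - (τ + (j * S.a - ⌊τ⌋ : ℤ)) =
      (j - Int.fract τ * 4 ^ k) / 4 ^ k := by
    rw [angle_next, angle, ← Int.self_sub_floor]
    push_cast
    field_simp
    ring
  have h1 := Nat.floor_le h0
  have h2 := Nat.lt_floor_add_one (Int.fract τ * 4 ^ k)
  rw [hdiff, abs_div, abs_of_pos h4]
  gcongr
  rw [abs_le]
  constructor <;> linarith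

lemma exists_third_le_dist_flow_next (hη : 0 < η) {k : ℕ} {A d t₀ : ℝ}
    (hA : ∀ x y, |S.profile η k x - S.profile η k y| ≤ A * |x - y|) (hA' : A ≤ 4 ^ k / 12)
    (h₀ : 1 / 2 ≤ S.profile η k (t₀ + d) - S.profile η k t₀) (x : ℝ) :
    ∃ i ≤ (S.next hη k).q, 1 / 3 ≤
      dist (torusProj ((S.next hη k).flow (i * (S.next hη k).angle) (S.twist η k (x + d, 0))))
        (torusProj ((S.next hη k).flow (i * (S.next hη k).angle) (S.twist η k (x, 0)))) := by
  obtain ⟨t, ht⟩ := exists_sub_eq_of_periodic (S.periodic_profile hη k) one_ne_zero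
    (S.continuous_profile hη k) (by norm_num) h₀
  obtain ⟨i, hi, m, hm⟩ := S.exists_abs_mul_angle_next_sub_le hη k (t - x)
  set s := i * (S.next hη k).angle
  have hclose (y : ℝ) : |S.profile η k (y + s) - S.profile η k (y + (t - x))| ≤ 1 / 12 := by
    have hper := (S.periodic_profile hη k).int_mul m (y + (t - x))
    rw [mul_one] at hper
    have : 0 ≤ A := (abs_nonneg _).trans ((hA 1 0).trans_eq (by norm_num))
    calc |S.profile η k (y + s) - S.profile η k (y + (t - x))|
        ≤ A * |y + s - (y + (t - x) + m)| := hper ▸ hA _ _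
      _ ≤ 4 ^ k / 12 * (1 / 4 ^ k) := by
        rw [add_assoc, add_sub_add_left_eq_sub]
        gcongr
      _ = 1 / 12 := by field_simp
  refine ⟨i, hi, le_trans ?_ (le_max_right _ _)⟩
  rw [flow_next_twist, flow_next_twist, dist_eq_norm]
  simp only [torusProj, Prod.mk_add_mk, add_zero, ← AddCircle.coe_sub]
  refine le_trans (by norm_num) (Torus1.le_norm_of_abs_sub_half_le (δ := 1 / 6) ?_)
  have h1 := abs_le.1 (hclose (x + d))
  have h2 := abs_le.1 (hclose x)
  rw [show x + d + (t - x) = t + d by ring] at h1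
  rw [add_sub_cancel] at h2
  change |S.profile η k (x + d + s) - S.profile η k (x + s) - 1 / 2| ≤ 1 / 6
  rw [← ht, abs_le]
  constructor <;> linarith [h1.1, h1.2, h2.1, h2.2]

lemma exists_separated_flow_next (hη : 0 < η) (hη' : η ≤ 1 / 4) :
    ∃ c : ℝ, 0 < c ∧ ∀ᶠ k : ℕ in atTop, ∃ (M : ℕ) (w : Fin M → ℝ × ℝ), c * k ≤ M ∧
      Pairwise fun j j' => ∃ i ≤ (S.next hη k).q, 1 / 3 ≤
        dist (torusProj ((S.next hη k).flow (i * (S.next hη k).angle) (w j)))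
          (torusProj ((S.next hη k).flow (i * (S.next hη k).angle) (w j'))) := by
  obtain ⟨c, hc⟩ := S.exists_abs_profile_sub_le η
  obtain ⟨L, -, hL⟩ := S.exists_dist_twist_le hη
  set b := 2 * c + 1 / 2
  have hb : 0 < b :=
    add_pos_of_nonneg_of_pos (mul_nonneg zero_le_two ((abs_nonneg _).trans (hc 0 0))) one_half_pos
  refine ⟨1 / (2 * b), by positivity, ?_⟩
  filter_upwards [eventually_mul_add_one_le_pow (12 * L) (r := 4) (by norm_num),
    eventually_gt_atTop 0] with k hk hk0
  have hk0' : (0 : ℝ) < k := Nat.cast_pos.2 hk0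
  have hq0 : (0 : ℝ) < S.q := Nat.cast_pos.2 S.q_pos
  have hLip (x y : ℝ) : |S.profile η k x - S.profile η k y| ≤ L * (k + 1) * |x - y| :=
    ((le_max_right _ _).trans (hL k (x, 0) (y, 0))).trans_eq (by simp)
  have hk' : L * (k + 1) ≤ 4 ^ k / 12 := by linarith
  set δ := b / (k * S.q)
  set M := ⌊1 / (2 * b) * k⌋₊ + 1
  refine ⟨M, fun j => S.twist η k (j * δ, 0),
    by exact_mod_cast (Nat.lt_floor_add_one _).le, fun j j' hne => ?_⟩
  wlog hlt : j' < j generalizing j j'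
  · obtain ⟨i, hi, hdist⟩ := this j' j hne.symm (hne.lt_of_le (not_lt.1 hlt))
    exact ⟨i, hi, by rwa [dist_comm]⟩
  have hjj : (j' : ℝ) + 1 ≤ j := by exact_mod_cast hlt
  have hj : (j : ℝ) ≤ 1 / (2 * b) * k :=
    (Nat.le_floor_iff (by positivity)).1 (Nat.lt_succ_iff.1 j.2)
  have hqd : S.q * ((j - j') * δ) = (j - j') * b / k := by simp only [δ]; field_simp
  have key := S.half_le_profile_sub hη hη' (hc k) (d := (j - j') * δ) ?_ ?_ ?_
  · have h := S.exists_third_le_dist_flow_next hη hLip hk' key (j' * δ)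
    rwa [← add_mul, add_sub_cancel] at h
  · rw [hqd, div_le_iff₀ hk0']
    calc ((j : ℝ) - j') * b ≤ j * b := by gcongr; simp
      _ ≤ 1 / (2 * b) * k * b := by gcongr
      _ = 1 / 2 * k := by field_simp
  · rw [hqd, mul_div_cancel₀ _ hk0'.ne']
    exact le_mul_of_one_le_left hb.le (by linarith)
  · exact mul_nonneg (by linarith) (by positivity)

end Stage

namespace Stage

variable (S : Stage) {η : ℝ}

/-- The factor map `𝕋² → 𝕋` of a stage onto the rotation by its angle: the first coordinate with
respect to `H`. -/
def factor (z : Torus2) : Torus1 := (descend S.H.symm z).1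

lemma factor_torusProj (p : ℝ × ℝ) : S.factor (torusProj p) = (S.H.symm p).1 :=
  congrArg Prod.fst (S.isVolumeLift.equivariant_symm.descend_torusProj p)

lemma factor_flow (t : ℝ) (z : Torus2) : S.factor (descend (S.flow t) z) = S.factor z + t := by
  obtain ⟨p, rfl⟩ := torusProj_surjective z
  rw [(S.isVolumeLift_flow t).equivariant.descend_torusProj, factor_torusProj, factor_torusProj,
    flow_apply, Equiv.symm_apply_apply, Prod.fst_add, AddCircle.coe_add]

lemma measurePreserving_factor : MeasurePreserving S.factor volume volume :=
  measurePreserving_fst.comp S.isVolumeLift.inv.measurePreserving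

lemma continuous_factor : Continuous S.factor :=
  continuous_fst.comp S.isVolumeLift.inv.continuous_descend

lemma dist_factor_next_le (hη : 0 < η) (k : ℕ) (z : Torus2) :
    dist ((S.next hη k).factor z) (S.factor z) ≤ 1 / (k * S.q) := by
  obtain ⟨p, rfl⟩ := torusProj_surjective z
  rw [factor_torusProj, factor_torusProj]
  exact (Torus1.dist_coe_le _ _).trans (S.abs_next_H_symm_fst_sub_le hη k p)

/-- The points of `𝕋²` at which both shears of `S.next hη k` are given by the linear part of their
sawtooth profiles. -/
def linearSet (hη : 0 < η) (k : ℕ) : Set Torus2 :=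
  {z | η ≤ ‖(descend (S.next hη k).H.symm z).2‖ ∧ η ≤ ‖(S.q : ℤ) • S.factor z‖}

lemma measurableSet_linearSet (hη : 0 < η) (k : ℕ) : MeasurableSet (S.linearSet hη k) :=
  (measurableSet_le measurable_const (continuous_norm.comp
    (continuous_snd.comp (S.next hη k).isVolumeLift.inv.continuous_descend)).measurable).inter
  (measurableSet_le measurable_const
    (continuous_norm.comp (S.continuous_factor.zsmul _)).measurable)

lemma volume_compl_linearSet_le (hη : 0 < η) (k : ℕ) :
    volume (S.linearSet hη k)ᶜ ≤ ENNReal.ofReal (4 * η) := by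
  have hball {f : Torus2 → Torus1} (hf : MeasurePreserving f volume volume) :
      volume {z | ‖f z‖ < η} ≤ ENNReal.ofReal (2 * η) := by
    calc volume {z | ‖f z‖ < η} ≤ volume (f ⁻¹' Metric.closedBall 0 η) :=
          measure_mono fun z hz => mem_closedBall_zero_iff.2 (le_of_lt hz)
      _ = volume (Metric.closedBall (0 : Torus1) η) :=
          hf.measure_preimage measurableSet_closedBall.nullMeasurableSet
      _ ≤ ENNReal.ofReal (2 * η) := by
          rw [AddCircle.volume_closedBall]
          exact ENNReal.ofReal_le_ofReal (min_le_right _ _)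
  have hsnd := hball (measurePreserving_snd.comp (S.next hη k).isVolumeLift.inv.measurePreserving)
  have hfst := hball ((Measure.measurePreserving_zsmul volume
    (Int.natCast_ne_zero.2 S.q_pos.ne')).comp S.measurePreserving_factor)
  calc volume (S.linearSet hη k)ᶜ
      ≤ volume ({z | ‖(descend (S.next hη k).H.symm z).2‖ < η} ∪
          {z | ‖(S.q : ℤ) • S.factor z‖ < η}) :=
        measure_mono fun z hz => (not_and_or.1 hz).imp not_le.1 not_le.1
    _ ≤ ENNReal.ofReal (2 * η) + ENNReal.ofReal (2 * η) :=
        (measure_union_le _ _).trans (add_le_add hsnd hfst)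
    _ = ENNReal.ofReal (4 * η) := by
        rw [← ENNReal.ofReal_add (by positivity) (by positivity)]
        ring_nf

lemma torusProj_eq_of_mem_linearSet (hη : 0 < η) {k : ℕ} (hk : 0 < k) {p : ℝ × ℝ}
    (hp : torusProj p ∈ S.linearSet hη k) :
    torusProj p = torusProj (S.H ((S.H.symm p).1, k * S.q * ((S.next hη k).H.symm p).1)) := by
  obtain ⟨hp₂, hp₁⟩ := hp
  rw [(S.next hη k).isVolumeLift.equivariant_symm.descend_torusProj, torusProj] at hp₂
  rw [factor_torusProj, ← AddCircle.coe_zsmul, zsmul_eq_mul, Int.cast_natCast] at hp₁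
  obtain ⟨m₁, hm₁⟩ := Torus1.coe_eq_coe_iff.1 (coe_smoothSawtooth hη hp₁)
  obtain ⟨m₂, hm₂⟩ := Torus1.coe_eq_coe_iff.1 (coe_smoothSawtooth hη hp₂)
  have hfst := S.next_H_symm_fst hη k p
  have hsnd := S.next_H_symm_snd hη k p
  rw [scaledSawtooth, Nat.cast_one, one_mul, hm₂] at hfst
  rw [scaledSawtooth, hm₁] at hsnd
  have hq : (S.q : ℝ) ≠ 0 := Nat.cast_ne_zero.2 S.q_pos.ne'
  have hk' : (k : ℝ) ≠ 0 := Nat.cast_ne_zero.2 hk.ne'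
  have hcoord : S.H.symm p = ((S.H.symm p).1, k * S.q * ((S.next hη k).H.symm p).1) +
      (((0 : ℤ) : ℝ), ((k * m₁ - m₂ : ℤ) : ℝ)) := by
    refine Prod.ext (by simp only [Prod.fst_add, Int.cast_zero, add_zero]) ?_
    rw [Prod.snd_add, hfst]
    push_cast
    field_simp
    linarith
  conv_lhs => rw [← S.H.apply_symm_apply p, hcoord, S.isVolumeLift.equivariant, torusProj_add_int]

lemma exists_abs_sub_eq_dist_factor (p : ℝ × ℝ) (z : Torus2) : ∃ p', torusProj p' = z ∧
    |(S.H.symm p).1 - (S.H.symm p').1| = dist (S.factor (torusProj p)) (S.factor z) := by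
  obtain ⟨p', rfl⟩ := torusProj_surjective z
  set m := round ((S.H.symm p).1 - (S.H.symm p').1)
  refine ⟨p' + ((m : ℝ), ((0 : ℤ) : ℝ)), torusProj_add_int p' m 0, ?_⟩
  rw [S.isVolumeLift.equivariant_symm, Prod.fst_add, factor_torusProj, factor_torusProj,
    dist_eq_norm, ← AddCircle.coe_sub, UnitAddCircle.norm_eq, sub_sub]

lemma dist_linearCoords_le (hη : 0 < η) {k : ℕ} (hk : 0 < k) {p p' : ℝ × ℝ}
    (hpp' : |((S.next hη k).H.symm p).1 - ((S.next hη k).H.symm p').1| ≤ 4 / (S.next hη k).q) :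
    dist ((S.H.symm p).1, k * S.q * ((S.next hη k).H.symm p).1)
      ((S.H.symm p').1, k * S.q * ((S.next hη k).H.symm p').1) ≤
      2 / k + 4 * (k + 1) / 4 ^ k := by
  have hq : (1 : ℝ) ≤ S.q := Nat.one_le_cast.2 S.q_pos
  have hk0 : (0 : ℝ) < k := Nat.cast_pos.2 hk
  have hNq : 4 / ((S.next hη k).q : ℝ) = 4 / (S.q * 4 ^ k) := by
    rw [next, Nat.cast_mul, Nat.cast_pow, Nat.cast_ofNat]
  rw [hNq] at hpp'
  refine max_le ?_ ?_
  · have h := S.abs_next_H_symm_fst_sub_le hη k p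
    rw [abs_sub_comm] at h
    calc dist (S.H.symm p).1 (S.H.symm p').1
        ≤ 1 / (k * S.q) + 4 / (S.q * 4 ^ k) + 1 / (k * S.q) :=
          (dist_triangle4 _ _ _ _).trans
            (add_le_add_three h hpp' (S.abs_next_H_symm_fst_sub_le hη k p'))
      _ ≤ 1 / (k * 1) + 4 / (1 * 4 ^ k) + 1 / (k * 1) := by gcongr
      _ = 2 / k + 4 * (0 + 1) / 4 ^ k := by ring
      _ ≤ 2 / k + 4 * (k + 1) / 4 ^ k := by gcongr
  · rw [Real.dist_eq, ← mul_sub, abs_mul, abs_of_nonneg (by positivity)]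
    calc k * S.q * |((S.next hη k).H.symm p).1 - ((S.next hη k).H.symm p').1|
        ≤ k * S.q * (4 / (S.q * 4 ^ k)) := by gcongr
      _ = 0 + 4 * (k + 0) / 4 ^ k := by field_simp; ring
      _ ≤ 2 / k + 4 * (k + 1) / 4 ^ k := by gcongr <;> positivity

lemma eventually_dist_le_of_mem_linearSet (hη : 0 < η) (n : ℕ) :
    ∀ᶠ k in atTop, ∀ z ∈ S.linearSet hη k, ∀ z' ∈ S.linearSet hη k,
      dist ((S.next hη k).factor z) ((S.next hη k).factor z') ≤ 4 / (S.next hη k).q →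
      dist z z' ≤ (1 / 2) ^ n := by
  obtain ⟨D, hD⟩ := S.isVolumeLift.equivariant.exists_norm_iteratedFDeriv_le
    S.isVolumeLift.contDiff one_ne_zero
  have hH := dist_le_mul_of_norm_iteratedFDeriv_one_le S.isVolumeLift.contDiff
    fun p => (hD p).trans (le_max_left D 1)
  have : 0 < max D 1 := lt_max_of_lt_right one_pos
  filter_upwards [eventually_gt_atTop 0, tendsto_natCast_atTop_atTop.eventually_ge_atTop
      (4 * max D 1 * 2 ^ n), eventually_mul_add_one_le_pow (8 * max D 1 * 2 ^ n) (r := 4)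
      (by norm_num)] with k hk hk₁ hk₂ z hz z' hz' hdist
  obtain ⟨p, rfl⟩ := torusProj_surjective z
  obtain ⟨p', rfl, hpp'⟩ := (S.next hη k).exists_abs_sub_eq_dist_factor p z'
  rw [← hpp'] at hdist
  rw [S.torusProj_eq_of_mem_linearSet hη hk hz, S.torusProj_eq_of_mem_linearSet hη hk hz']
  calc _ ≤ max D 1 * (2 / k + 4 * (k + 1) / 4 ^ k) :=
        (dist_torusProj_le _ _).trans ((hH _ _).trans
          (by gcongr; exact S.dist_linearCoords_le hη hk hdist))
    _ = 4 * max D 1 * 2 ^ n / k * (1 / 2 / 2 ^ n) +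
          8 * max D 1 * 2 ^ n * (k + 1) / 4 ^ k * (1 / 2 / 2 ^ n) := by field_simp; ring
    _ ≤ 1 * (1 / 2 / 2 ^ n) + 1 * (1 / 2 / 2 ^ n) := by
        gcongr
        · exact div_le_one_of_le₀ hk₁ k.cast_nonneg
        · exact div_le_one_of_le₀ hk₂ (by positivity)
    _ = (1 / 2) ^ n := by
        rw [one_div_pow]
        ring

end Stage

section SlowEntropy

section BowenCover

variable {X : Type*} [PseudoMetricSpace X] {T : X → X} {ε : ℝ}

lemma bowenDist_lt_iff (hε : 0 < ε) {n : ℕ} {x y : X} :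
    bowenDist T n x y < ε ↔ ∀ i < n, dist (T^[i] x) (T^[i] y) < ε := by
  unfold bowenDist
  lift ε to ℝ≥0 using hε.le
  rw [NNReal.coe_lt_coe, Finset.sup_lt_iff (by exact_mod_cast hε)]
  simp only [Finset.mem_range, dist_nndist, NNReal.coe_lt_coe]

lemma bowenCoverNum_le_card {n : ℕ} {F : Finset X} (hF : ∀ y, ∃ x ∈ F, bowenDist T n x y < ε) :
    bowenCoverNum T n ε ≤ F.card :=
  Nat.sInf_le ⟨F, rfl, hF⟩

lemma exists_finset_bowenDist_lt [CompactSpace X] (hT : Continuous T) (hε : 0 < ε) (n : ℕ) :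
    ∃ F : Finset X, ∀ y, ∃ x ∈ F, bowenDist T n x y < ε := by
  have hopen (x : X) : IsOpen {y | bowenDist T n x y < ε} := by
    have : {y | bowenDist T n x y < ε} =
        ⋂ i ∈ Finset.range n, {y | dist (T^[i] x) (T^[i] y) < ε} := by
      ext y
      simp only [mem_ofPred_eq, bowenDist_lt_iff hε, mem_iInter, Finset.mem_range]
    rw [this]
    exact isOpen_biInter_finset fun i _ =>
      isOpen_lt (continuous_const.dist (hT.iterate i)) continuous_const
  have hcover : (univ : Set X) ⊆ ⋃ x, {y | bowenDist T n x y < ε} := fun y _ =>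
    mem_iUnion.2 ⟨y, (bowenDist_lt_iff hε).2 fun i _ => by rwa [dist_self]⟩
  obtain ⟨F, hF⟩ := isCompact_univ.elim_finite_subcover _ hopen hcover
  refine ⟨F, fun y => ?_⟩
  simpa only [mem_iUnion, mem_ofPred_eq, exists_prop] using hF (mem_univ y)

lemma card_le_bowenCoverNum_of_separated [CompactSpace X] (hT : Continuous T) (hε : 0 < ε)
    {n : ℕ} {ι : Type*} [Fintype ι] {w : ι → X}
    (hw : Pairwise fun j j' => ∃ i < n, 2 * ε ≤ dist (T^[i] (w j)) (T^[i] (w j'))) :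
    Fintype.card ι ≤ bowenCoverNum T n ε := by
  obtain ⟨F₀, hF₀⟩ := exists_finset_bowenDist_lt hT hε n
  obtain ⟨F, hcard, hF⟩ : bowenCoverNum T n ε ∈
      {N | ∃ F : Finset X, F.card = N ∧ ∀ y, ∃ x ∈ F, bowenDist T n x y < ε} :=
    Nat.sInf_mem ⟨_, F₀, rfl, hF₀⟩
  choose center hmem hlt using fun j => hF (w j)
  rw [← hcard, ← Fintype.card_coe]
  refine Fintype.card_le_of_injective (fun j => (⟨center j, hmem j⟩ : F)) fun j j' hjj' => ?_
  by_contra hne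
  obtain ⟨i, hi, hd⟩ := hw hne
  have hj := (bowenDist_lt_iff hε).1 (hlt j) i hi
  have hj' := (bowenDist_lt_iff hε).1 (hlt j') i hi
  rw [← Subtype.mk.inj hjj'] at hj'
  linarith [dist_triangle_left (T^[i] (w j)) (T^[i] (w j')) (T^[i] (center j))]

lemma topSlowEntFun_eq {a : ℕ → ℝ → ℝ} {E : ℝ} (hE : 0 < E)
    (hpos : ∀ t, 0 < t → t < E →
      0 < atTop.limsup fun n => (bowenCoverNum T n ε : ℝ≥0∞) / ENNReal.ofReal (a n t))
    (hzero : ∀ t, E < t →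
      atTop.limsup (fun n => (bowenCoverNum T n ε : ℝ≥0∞) / ENNReal.ofReal (a n t)) = 0) :
    topSlowEntFun T a ε = E := by
  refine csSup_eq_of_forall_le_of_forall_lt_exists_gt
    ⟨E / 2, by positivity, hpos _ (by positivity) (by linarith)⟩ ?_ fun w hw => ?_
  · rintro t ⟨_, ht⟩
    by_contra! hlt
    exact ht.ne' (hzero t hlt)
  · obtain ⟨t, ht, htE⟩ := exists_between (max_lt hw hE)
    have ht0 : 0 < t := (le_max_right _ _).trans_lt ht
    exact ⟨t, ⟨ht0, hpos t ht0 htE⟩, (le_max_left _ _).trans_lt ht⟩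

end BowenCover

section LogScale

variable {N K : ℕ → ℕ} {t : ℝ}

lemma logScale_pos {m : ℕ} (hm : 2 ≤ m) (t : ℝ) : 0 < logScale m t :=
  Real.rpow_pos_of_pos (Real.log_pos (by exact_mod_cast hm)) t

lemma natCast_div_ofReal_logScale {m : ℕ} (hm : 2 ≤ m) (n : ℕ) (t : ℝ) :
    (n : ℝ≥0∞) / ENNReal.ofReal (logScale m t) = ENNReal.ofReal (n / logScale m t) := by
  rw [ENNReal.ofReal_div_of_pos (logScale_pos hm t), ENNReal.ofReal_natCast]

lemma half_rpow_le_logScale {k m : ℕ} (hm : 2 ^ k ≤ m) (ht : 0 ≤ t) :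
    ((k : ℝ) / 2) ^ t ≤ logScale m t := by
  have hlog : k * Real.log 2 ≤ Real.log m := by
    rw [← Real.log_pow]
    exact Real.log_le_log (by positivity) (by exact_mod_cast hm)
  have := Real.log_two_gt_d9
  exact Real.rpow_le_rpow (by positivity) (by nlinarith [k.cast_nonneg (α := ℝ)]) ht

lemma limsup_div_logScale_eq_zero (hK : StrictMono K) {C : ℝ}
    (hN : ∀ s : ℝ, 0 < s → ∀ᶠ n in atTop, ∀ m ≤ 2 ^ K (n + 1), (N m : ℝ) ≤ C * (K n : ℝ) ^ (1 + s))
    (ht : 1 < t) :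
    atTop.limsup (fun m => (N m : ℝ≥0∞) / ENNReal.ofReal (logScale m t)) = 0 := by
  have hKr : Tendsto (fun n => (K n : ℝ)) atTop atTop :=
    tendsto_natCast_atTop_atTop.comp hK.tendsto_atTop
  have hbound : Tendsto (fun n => C * 2 ^ t * (K n : ℝ) ^ (-((t - 1) / 2))) atTop (𝓝 0) := by
    simpa only [mul_zero, Function.comp_def] using
      ((tendsto_rpow_neg_atTop (by linarith : 0 < (t - 1) / 2)).comp hKr).const_mul (C * 2 ^ t)
  have hratio : Tendsto (fun m => (N m : ℝ) / logScale m t) atTop (𝓝 0) := by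
    refine Metric.tendsto_atTop.2 fun δ hδ => ?_
    obtain ⟨n₀, hn₀⟩ := eventually_atTop.1 ((hbound.eventually_lt_const hδ).and
      ((hN ((t - 1) / 2) (by linarith)).and (hKr.eventually_gt_atTop 0)))
    have hmono : StrictMono fun n => 2 ^ K (n + n₀) := fun i j hij =>
      Nat.pow_lt_pow_right one_lt_two (hK (by omega))
    refine ⟨2 ^ K n₀ + 1, fun m hm => ?_⟩
    obtain ⟨n, hlt, hle⟩ := hmono.exists_between_of_tendsto_atTop hmono.tendsto_atTop
      (x := m) (by rw [zero_add]; omega)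
    obtain ⟨hδn, hNn, hKn⟩ := hn₀ (n + n₀) (by omega)
    have hscale := half_rpow_le_logScale hlt.le (by linarith : 0 ≤ t)
    have hpos : 0 < ((K (n + n₀) : ℝ) / 2) ^ t := by positivity
    rw [Real.dist_eq, sub_zero, abs_of_nonneg (div_nonneg (Nat.cast_nonneg _)
      (hpos.le.trans hscale))]
    calc (N m : ℝ) / logScale m t
        ≤ N m / ((K (n + n₀) : ℝ) / 2) ^ t := by gcongr
      _ ≤ C * (K (n + n₀) : ℝ) ^ (1 + (t - 1) / 2) / ((K (n + n₀) : ℝ) / 2) ^ t := by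
          gcongr
          exact hNn m (by rwa [add_right_comm])
      _ = C * 2 ^ t * (K (n + n₀) : ℝ) ^ (-((t - 1) / 2)) := by
          rw [Real.div_rpow hKn.le zero_le_two, ← div_mul, mul_div_assoc, ← Real.rpow_sub hKn,
            mul_right_comm]
          ring_nf
      _ < δ := hδn
  rw [← ENNReal.ofReal_zero]
  refine ((ENNReal.tendsto_ofReal hratio).congr' ?_).limsup_eq
  filter_upwards [eventually_ge_atTop 2] with m hm
  exact (natCast_div_ofReal_logScale hm _ t).symm

lemma limsup_div_logScale_pos (hK : Tendsto K atTop atTop) {m : ℕ → ℕ}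
    (hm : Tendsto m atTop atTop) {C : ℝ} (hC : 0 < C) (hlog : ∀ n, Real.log (m n) ≤ C * K n)
    (hN : ∀ s : ℝ, 0 < s → ∀ᶠ n in atTop, (K n : ℝ) ^ (1 - s) ≤ N (m n)) (ht : 0 < t)
    (ht' : t < 1) :
    0 < atTop.limsup fun m => (N m : ℝ≥0∞) / ENNReal.ofReal (logScale m t) := by
  have hKr : Tendsto (fun n => (K n : ℝ)) atTop atTop := tendsto_natCast_atTop_atTop.comp hK
  have hs : 0 < (1 - t) / 2 := by linarith
  have hev : ∀ᶠ n in atTop, 1 ≤ (N (m n) : ℝ≥0∞) / ENNReal.ofReal (logScale (m n) t) := by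
    filter_upwards [((tendsto_rpow_atTop hs).comp hKr).eventually_ge_atTop (C ^ t), hN _ hs,
      hKr.eventually_gt_atTop 0, hm.eventually_ge_atTop 2] with n hCn hNn hKn hmn
    rw [natCast_div_ofReal_logScale hmn, ENNReal.one_le_ofReal, one_le_div (logScale_pos hmn t)]
    calc logScale (m n) t ≤ (C * K n) ^ t :=
          Real.rpow_le_rpow (Real.log_natCast_nonneg _) (hlog n) ht.le
      _ = C ^ t * (K n : ℝ) ^ t := Real.mul_rpow hC.le hKn.le
      _ ≤ (K n : ℝ) ^ ((1 - t) / 2) * (K n : ℝ) ^ t := by gcongr; exact hCn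
      _ = (K n : ℝ) ^ (1 - (1 - t) / 2) := by rw [← Real.rpow_add hKn]; ring_nf
      _ ≤ N (m n) := hNn
  exact zero_lt_one.trans_le (le_limsup_of_frequently_le (hm.frequently hev.frequently))

end LogScale

end SlowEntropy

section SequenceLimits

variable {X : Type*} [PseudoMetricSpace X]

lemma le_mul_half_pow {b : ℕ → ℝ} (hb : ∀ n, b (n + 1) ≤ b n / 2) (n : ℕ) :
    b n ≤ b 0 * (1 / 2) ^ n := by
  induction n with
  | zero => rw [pow_zero, mul_one]
  | succ n ih => rw [pow_succ]; linarith [hb n]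

lemma dist_le_two_mul_of_tendsto {x : ℕ → X} {a : X} {b : ℕ → ℝ} (hb : ∀ n, b (n + 1) ≤ b n / 2)
    (hx : ∀ n, dist (x n) (x (n + 1)) ≤ b n) (ha : Tendsto x atTop (𝓝 a)) :
    dist (x 0) a ≤ 2 * b 0 := by
  have := dist_le_of_le_geometric_of_tendsto₀ (1 / 2 : ℝ) (b 0) (by norm_num)
    (fun n => (hx n).trans (le_mul_half_pow hb n)) ha
  exact this.trans_eq (by ring)

lemma exists_tendsto_dist_le_two_mul [CompleteSpace X] {x : ℕ → X} {b : ℕ → ℝ}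
    (hb : ∀ n, b (n + 1) ≤ b n / 2) (hx : ∀ n, dist (x n) (x (n + 1)) ≤ b n) :
    ∃ a, Tendsto x atTop (𝓝 a) ∧ ∀ n, dist (x n) a ≤ 2 * b n := by
  obtain ⟨a, ha⟩ := cauchySeq_tendsto_of_complete (cauchySeq_of_le_geometric (1 / 2 : ℝ) (b 0)
    (by norm_num) fun n => (hx n).trans (le_mul_half_pow hb n))
  refine ⟨a, ha, fun n => ?_⟩
  have := dist_le_two_mul_of_tendsto (x := fun j => x (j + n)) (b := fun j => b (j + n))
    (fun j => by simpa only [add_right_comm j n 1] using hb (j + n))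
    (fun j => by simpa only [add_right_comm j n 1] using hx (j + n))
    ((tendsto_add_atTop_iff_nat n).2 ha)
  simpa only [zero_add] using this

lemma tendsto_iterate_of_tendstoUniformly {X : Type*} [UniformSpace X] {f : ℕ → X → X} {g : X → X}
    (h : TendstoUniformly f g atTop) (hg : Continuous g) (i : ℕ) (x : X) :
    Tendsto (fun n => (f n)^[i] x) atTop (𝓝 (g^[i] x)) := by
  induction i with
  | zero => exact tendsto_const_nhds
  | succ i ih =>
    simp only [Function.iterate_succ_apply']
    exact h.tendsto_comp hg.continuousAt ih

end SequenceLimits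

lemma eventually_mul_add_one_le_rpow (C : ℝ) {r : ℝ} (hr : 0 < r) :
    ∀ᶠ k : ℕ in atTop, C * (k + 1) ≤ (k : ℝ) ^ (1 + r) := by
  filter_upwards [((tendsto_rpow_atTop hr).comp tendsto_natCast_atTop_atTop).eventually_ge_atTop
    (2 * |C|), eventually_ge_atTop 1] with k hk hk1
  have hk1' : (1 : ℝ) ≤ k := by exact_mod_cast hk1
  calc C * (k + 1) ≤ |C| * (k + k) := by gcongr; exact le_abs_self C
    _ = k * (2 * |C|) := by ring
    _ ≤ k * (k : ℝ) ^ r := by gcongr; exact hk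
    _ = (k : ℝ) ^ (1 + r) := by rw [Real.rpow_add (by positivity), Real.rpow_one]

lemma eventually_rpow_le_mul {c : ℝ} (hc : 0 < c) {r : ℝ} (hr : 0 < r) :
    ∀ᶠ k : ℕ in atTop, (k : ℝ) ^ (1 - r) ≤ c * k := by
  filter_upwards [((tendsto_rpow_neg_atTop hr).comp
    tendsto_natCast_atTop_atTop).eventually_le_const hc, eventually_gt_atTop 0] with k hk hk0
  have hk0' : (0 : ℝ) < k := by exact_mod_cast hk0
  rw [sub_eq_neg_add, Real.rpow_add hk0', Real.rpow_one]
  gcongr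
  exact hk

namespace Stage

variable (S : Stage) {η : ℝ}

/-- The requirements on the parameter `k` of the `n`-th step of the construction: the next stage
is close to `S`, its orbits up to time `2 ^ k` need about `k` Bowen balls, about `k` of them are
separated by the time `q` at which they close up, and on most of the torus points with nearby
factors are close. -/
structure Admissible (hη : 0 < η) (n k : ℕ) : Prop where
  pos : 0 < k
  q_le : S.q ≤ 2 ^ k
  norm_iteratedFDeriv_le : ∀ m : ℤ, |m| ≤ 2 ^ k → ∀ i ≤ n, ∀ p,
    ‖iteratedFDeriv ℝ i (fun y => (S.next hη k).flow (m * (S.next hη k).angle) y -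
      S.flow (m * S.angle) y) p‖ ≤ (1 / 2) ^ n
  exists_cover : ∀ ε : ℝ, 0 < ε → ε ≤ 1 → ∃ F : Finset (ℝ × ℝ),
    (F.card : ℝ) ≤ (k : ℝ) ^ (1 + 1 / (n + 1 : ℝ)) / ε ^ 2 ∧ ∀ p, ∃ w ∈ F, ∀ t,
      dist (torusProj ((S.next hη k).flow t p)) (torusProj ((S.next hη k).flow t w)) < ε
  exists_separated : ∃ (M : ℕ) (w : Fin M → ℝ × ℝ), (k : ℝ) ^ (1 - 1 / (n + 1 : ℝ)) ≤ M ∧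
    Pairwise fun j j' => ∃ i ≤ (S.next hη k).q, 1 / 3 ≤
      dist (torusProj ((S.next hη k).flow (i * (S.next hη k).angle) (w j)))
        (torusProj ((S.next hη k).flow (i * (S.next hη k).angle) (w j')))
  dist_le_of_mem_linearSet : ∀ z ∈ S.linearSet hη k, ∀ z' ∈ S.linearSet hη k,
    dist ((S.next hη k).factor z) ((S.next hη k).factor z') ≤ 4 / (S.next hη k).q →
      dist z z' ≤ (1 / 2) ^ n

lemma eventually_admissible (hη : 0 < η) (hη' : η ≤ 1 / 4) (n : ℕ) :
    ∀ᶠ k in atTop, S.Admissible hη n k := by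
  have hr : 0 < 1 / (n + 1 : ℝ) := by positivity
  obtain ⟨C, hC⟩ := S.exists_card_le_forall_dist_flow_lt hη
  obtain ⟨c, hc, hsep⟩ := S.exists_separated_flow_next hη hη'
  filter_upwards [eventually_gt_atTop 0,
    (tendsto_pow_atTop_atTop_of_one_lt one_lt_two).eventually_ge_atTop S.q,
    S.eventually_norm_iteratedFDeriv_flow_next_sub_le hη n, eventually_mul_add_one_le_rpow C hr,
    hsep, eventually_rpow_le_mul hc hr, S.eventually_dist_le_of_mem_linearSet hη n]
    with k hk hq hnear hCk ⟨M, w, hM, hw⟩ hck hlin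
  refine ⟨hk, hq, hnear, fun ε hε hε' => ?_, ⟨M, w, hck.trans hM, hw⟩, hlin⟩
  obtain ⟨F, hcard, hF⟩ := hC k ε hε hε'
  exact ⟨F, hcard.trans (by gcongr), hF⟩

end Stage

/-- The parameter `η` of the sawtooths of the `n`-th step; it is summable, as needed for the
Borel–Cantelli lemma. -/
def sawtoothWidth (n : ℕ) : ℝ := (1 / 2) ^ (n + 3)

lemma sawtoothWidth_pos (n : ℕ) : 0 < sawtoothWidth n := by
  unfold sawtoothWidth
  positivity

lemma sawtoothWidth_le (n : ℕ) : sawtoothWidth n ≤ 1 / 4 :=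
  (pow_le_pow_of_le_one (by norm_num) (by norm_num) (by omega : 2 ≤ n + 3)).trans (by norm_num)

/-- A sequence of stages, each obtained from the previous one by an admissible step. -/
structure AnosovKatokSequence where
  stage : ℕ → Stage
  k : ℕ → ℕ
  stage_succ : ∀ n, stage (n + 1) = (stage n).next (sawtoothWidth_pos n) (k n)
  admissible : ∀ n, (stage n).Admissible (sawtoothWidth_pos n) n (k n)

namespace AnosovKatokSequence

instance : Nonempty AnosovKatokSequence := by
  choose k hk using fun (n : ℕ) (S : Stage) =>
    (S.eventually_admissible (sawtoothWidth_pos n) (sawtoothWidth_le n) n).exists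
  let S₀ : Stage := ⟨rot 0, isVolumeLift_rot 0, 1, one_pos, 0⟩
  let stage : ℕ → Stage := Nat.rec S₀ fun n S => S.next (sawtoothWidth_pos n) (k n S)
  exact ⟨stage, fun n => k n (stage n), fun _ => rfl, fun n => hk n (stage n)⟩

variable (𝒜 : AnosovKatokSequence)

lemma q_succ (n : ℕ) : (𝒜.stage (n + 1)).q = (𝒜.stage n).q * 4 ^ 𝒜.k n := by
  rw [stage_succ]
  rfl

lemma two_mul_q_le (n : ℕ) : 2 * (𝒜.stage n).q ≤ (𝒜.stage (n + 1)).q := by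
  rw [q_succ, mul_comm]
  gcongr
  calc 2 ≤ 4 ^ 1 := by norm_num
    _ ≤ 4 ^ 𝒜.k n := Nat.pow_le_pow_right (by norm_num) (𝒜.admissible n).pos

lemma one_div_q_succ_le (n : ℕ) :
    1 / ((𝒜.stage (n + 1)).q : ℝ) ≤ 1 / ((𝒜.stage n).q : ℝ) / 2 := by
  have hq : (0 : ℝ) < (𝒜.stage n).q := Nat.cast_pos.2 (𝒜.stage n).q_pos
  rw [div_div]
  gcongr
  rw [mul_comm]
  exact_mod_cast 𝒜.two_mul_q_le n

lemma k_strictMono : StrictMono 𝒜.k := by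
  refine strictMono_nat_of_lt_succ fun n => ?_
  have h : 2 ^ (2 * 𝒜.k n) ≤ 2 ^ 𝒜.k (n + 1) := by
    calc 2 ^ (2 * 𝒜.k n) = 1 * 4 ^ 𝒜.k n := by rw [pow_mul, one_mul]; norm_num
      _ ≤ (𝒜.stage (n + 1)).q := by
        rw [q_succ]
        gcongr
        exact (𝒜.stage n).q_pos
      _ ≤ 2 ^ 𝒜.k (n + 1) := (𝒜.admissible (n + 1)).q_le
  have := (Nat.pow_le_pow_iff_right one_lt_two).1 h
  have := (𝒜.admissible n).pos
  omega

lemma norm_iteratedFDeriv_flow_succ_sub_le {n : ℕ} {m : ℤ} (hm : |m| ≤ 2 ^ 𝒜.k n) {i : ℕ}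
    (hi : i ≤ n) (p : ℝ × ℝ) :
    ‖iteratedFDeriv ℝ i (fun y => (𝒜.stage (n + 1)).flow (m * (𝒜.stage (n + 1)).angle) y -
      (𝒜.stage n).flow (m * (𝒜.stage n).angle) y) p‖ ≤ (1 / 2) ^ n := by
  rw [stage_succ]
  exact (𝒜.admissible n).norm_iteratedFDeriv_le m hm i hi p

lemma dist_flow_succ_le {n i : ℕ} (hi : i ≤ 2 ^ 𝒜.k n) (p : ℝ × ℝ) :
    dist ((𝒜.stage n).flow (i * (𝒜.stage n).angle) p)
      ((𝒜.stage (n + 1)).flow (i * (𝒜.stage (n + 1)).angle) p) ≤ (1 / 2) ^ n := by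
  rw [dist_comm, dist_eq_norm]
  simpa using 𝒜.norm_iteratedFDeriv_flow_succ_sub_le (m := i)
    (by rw [Nat.abs_cast]; exact_mod_cast hi) n.zero_le p

lemma exists_limitLift : ∃ Q, IsVolumeLift Q ∧ ∀ n p,
    dist ((𝒜.stage n).flow (𝒜.stage n).angle p) (Q p) ≤ 2 * (1 / 2) ^ n := by
  refine IsVolumeLift.exists_limit (fun n => (𝒜.stage n).isVolumeLift_flow _)
    (fun n i hi p => ?_) fun n i hi p => ?_
  · simpa using 𝒜.norm_iteratedFDeriv_flow_succ_sub_le (m := 1)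
      (by simpa using one_le_pow₀ one_le_two) hi p
  · simpa [Stage.flow_symm] using
      𝒜.norm_iteratedFDeriv_flow_succ_sub_le (m := -1) (by simpa using one_le_pow₀ one_le_two) hi p

/-- The lift of the limit diffeomorphism. -/
def limitLift : Equiv.Perm (ℝ × ℝ) := 𝒜.exists_limitLift.choose

lemma isVolumeLift_limitLift : IsVolumeLift 𝒜.limitLift := 𝒜.exists_limitLift.choose_spec.1

lemma dist_limitLift_le (n : ℕ) (p : ℝ × ℝ) :
    dist ((𝒜.stage n).flow (𝒜.stage n).angle p) (𝒜.limitLift p) ≤ 2 * (1 / 2) ^ n :=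
  𝒜.exists_limitLift.choose_spec.2 n p

/-- The diffeomorphism of `𝕋²` constructed by the sequence, the limit of those of its stages. -/
def map : Torus2 → Torus2 := descend 𝒜.limitLift

lemma isCkTorusDiffeo_map : IsCkTorusDiffeo ⊤ 𝒜.map := 𝒜.isVolumeLift_limitLift.isCkTorusDiffeo

lemma measurePreserving_map : MeasurePreserving 𝒜.map volume volume :=
  𝒜.isVolumeLift_limitLift.measurePreserving

lemma continuous_map : Continuous 𝒜.map := 𝒜.isVolumeLift_limitLift.continuous_descend

lemma map_torusProj (p : ℝ × ℝ) : 𝒜.map (torusProj p) = torusProj (𝒜.limitLift p) :=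
  𝒜.isVolumeLift_limitLift.equivariant.descend_torusProj p

lemma dist_iterate_limitLift_le {n i : ℕ} (hi : i ≤ 2 ^ 𝒜.k n) (p : ℝ × ℝ) :
    dist ((𝒜.stage n).flow (i * (𝒜.stage n).angle) p) (𝒜.limitLift^[i] p) ≤ 2 * (1 / 2) ^ n := by
  have hlim := tendsto_iterate_of_tendstoUniformly
    (tendstoUniformly_of_dist_le_half_pow 𝒜.dist_limitLift_le)
    𝒜.isVolumeLift_limitLift.contDiff.continuous i p
  simp only [Stage.iterate_flow] at hlim
  have := dist_le_two_mul_of_tendsto (b := fun j => (1 / 2 : ℝ) ^ (j + n))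
    (fun j => by rw [add_right_comm, pow_succ]; linarith)
    (fun j => by
      simpa only [add_right_comm j n 1] using 𝒜.dist_flow_succ_le (n := j + n)
        (hi.trans (Nat.pow_le_pow_right two_pos (𝒜.k_strictMono.monotone (Nat.le_add_left n j)))) p)
    ((tendsto_add_atTop_iff_nat n).2 hlim)
  simpa only [zero_add] using this

lemma dist_iterate_map_le {n i : ℕ} (hi : i ≤ 2 ^ 𝒜.k n) (p : ℝ × ℝ) :
    dist (𝒜.map^[i] (torusProj p)) (torusProj ((𝒜.stage n).flow (i * (𝒜.stage n).angle) p)) ≤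
      2 * (1 / 2) ^ n := by
  have hsemi : Function.Semiconj torusProj 𝒜.limitLift 𝒜.map := fun p => (𝒜.map_torusProj p).symm
  rw [← hsemi.iterate_right i p, dist_comm]
  exact (dist_torusProj_le _ _).trans (𝒜.dist_iterate_limitLift_le hi p)

section Entropy

variable {ε : ℝ}

lemma bowenCoverNum_map_le (hε : 0 < ε) (hε' : ε ≤ 1) {n : ℕ} (hn : 2 * (1 / 2) ^ n ≤ ε / 2)
    {m : ℕ} (hm : m ≤ 2 ^ 𝒜.k (n + 1)) :
    (bowenCoverNum 𝒜.map m ε : ℝ) ≤ (𝒜.k n : ℝ) ^ (1 + 1 / (n + 1 : ℝ)) / (ε / 2) ^ 2 := by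
  classical
  obtain ⟨F, hcard, hF⟩ := (𝒜.admissible n).exists_cover (ε / 2) (by positivity) (by linarith)
  simp only [← stage_succ] at hF
  refine le_trans (Nat.cast_le.2 ((bowenCoverNum_le_card (F := F.image torusProj)
    fun y => ?_).trans Finset.card_image_le)) hcard
  obtain ⟨p, rfl⟩ := torusProj_surjective y
  obtain ⟨w, hw, hd⟩ := hF p
  refine ⟨torusProj w, Finset.mem_image_of_mem _ hw, (bowenDist_lt_iff hε).2 fun i hi => ?_⟩
  have hp := 𝒜.dist_iterate_map_le (hi.le.trans hm) p
  have hw' := 𝒜.dist_iterate_map_le (hi.le.trans hm) w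
  have hpw := hd (i * (𝒜.stage (n + 1)).angle)
  rw [dist_comm] at hp hpw
  refine (dist_triangle4 _ _ _ _).trans_lt ((add_lt_add_of_lt_of_le
    (add_lt_add_of_le_of_lt hw' hpw) hp).trans_le ?_)
  rw [pow_succ]
  linarith

lemma rpow_le_bowenCoverNum_map (hε : 0 < ε) (hε' : ε ≤ 1 / 24) {n : ℕ}
    (hn : 2 * (1 / 2) ^ n ≤ ε / 2) :
    (𝒜.k n : ℝ) ^ (1 - 1 / (n + 1 : ℝ)) ≤
      bowenCoverNum 𝒜.map ((𝒜.stage (n + 1)).q + 1) ε := by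
  obtain ⟨M, w, hM, hw⟩ := (𝒜.admissible n).exists_separated
  simp only [← stage_succ] at hw
  refine hM.trans (Nat.cast_le.2 ?_)
  rw [← Fintype.card_fin M]
  refine card_le_bowenCoverNum_of_separated (w := torusProj ∘ w) 𝒜.continuous_map hε
    fun j j' hjj' => ?_
  obtain ⟨i, hi, hd⟩ := hw hjj'
  have hi' := hi.trans (𝒜.admissible (n + 1)).q_le
  have hj := 𝒜.dist_iterate_map_le hi' (w j)
  have hj' := 𝒜.dist_iterate_map_le hi' (w j')
  refine ⟨i, Nat.lt_succ_of_le hi, ?_⟩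
  have := hd.trans (dist_triangle4_left (𝒜.map^[i] (torusProj (w j)))
    (𝒜.map^[i] (torusProj (w j'))) _ _)
  rw [pow_succ] at hj hj'
  simp only [Function.comp_apply]
  linarith

lemma log_q_succ_le (n : ℕ) :
    Real.log (((𝒜.stage (n + 1)).q + 1 : ℕ) : ℝ) ≤ 4 * Real.log 2 * 𝒜.k n := by
  have hq : (𝒜.stage (n + 1)).q + 1 ≤ 2 ^ (𝒜.k n * 4) := by
    calc (𝒜.stage (n + 1)).q + 1 ≤ 2 ^ 𝒜.k n * 4 ^ 𝒜.k n + 1 := by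
          rw [q_succ]
          gcongr
          exact (𝒜.admissible n).q_le
      _ = 8 ^ 𝒜.k n + 1 := by rw [← mul_pow]; norm_num
      _ ≤ 16 ^ 𝒜.k n := Nat.pow_lt_pow_left (by norm_num) (𝒜.admissible n).pos.ne'
      _ = 2 ^ (𝒜.k n * 4) := by rw [mul_comm, pow_mul]; norm_num
  calc Real.log (((𝒜.stage (n + 1)).q + 1 : ℕ) : ℝ) ≤ Real.log (2 ^ (𝒜.k n * 4)) :=
        Real.log_le_log (by positivity) (by exact_mod_cast hq)
    _ = 4 * Real.log 2 * 𝒜.k n := by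
      rw [Real.log_pow]
      push_cast
      ring

lemma topSlowEntFun_map (hε : 0 < ε) (hε' : ε ≤ 1 / 24) :
    topSlowEntFun 𝒜.map logScale ε = 1 := by
  have hk (n) : (1 : ℝ) ≤ 𝒜.k n := Nat.one_le_cast.2 (𝒜.admissible n).pos
  refine topSlowEntFun_eq one_pos
    (fun t => limsup_div_logScale_pos (K := 𝒜.k) (m := fun n => (𝒜.stage (n + 1)).q + 1)
      𝒜.k_strictMono.tendsto_atTop ?_ (by positivity) 𝒜.log_q_succ_le fun s hs => ?_)
    fun t => limsup_div_logScale_eq_zero (C := 1 / (ε / 2) ^ 2) 𝒜.k_strictMono fun s hs => ?_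
  · have hq : StrictMono fun n => (𝒜.stage n).q := strictMono_nat_of_lt_succ fun n => by
      have := (𝒜.stage n).q_pos
      have := 𝒜.two_mul_q_le n
      omega
    exact (tendsto_add_atTop_nat 1).comp ((tendsto_add_atTop_iff_nat 1).2 hq.tendsto_atTop)
  · filter_upwards [tendsto_two_mul_half_pow.eventually_le_const (half_pos hε),
      tendsto_one_div_add_atTop_nhds_zero_nat.eventually_le_const hs] with n hn hsn
    exact (Real.rpow_le_rpow_of_exponent_le (hk n) (by linarith)).trans
      (𝒜.rpow_le_bowenCoverNum_map hε hε' hn)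
  · filter_upwards [tendsto_two_mul_half_pow.eventually_le_const (half_pos hε),
      tendsto_one_div_add_atTop_nhds_zero_nat.eventually_le_const hs] with n hn hsn m hm
    rw [one_div_mul_eq_div]
    refine (𝒜.bowenCoverNum_map_le hε (by linarith) hn hm).trans ?_
    gcongr
    exact hk n

lemma hasUpperTopSlowEntropy_map : HasUpperTopSlowEntropy 𝒜.map logScale 1 := by
  refine tendsto_const_nhds.congr' ?_
  filter_upwards [Ioc_mem_nhdsGT (by norm_num : (0 : ℝ) < 1 / 24)] with ε hε
  exact (𝒜.topSlowEntFun_map hε.1 hε.2).symm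

end Entropy

end AnosovKatokSequence

lemma irrational_of_forall_exists_abs_mul_sub_lt {x : ℝ}
    (h : ∀ N : ℕ, ∃ (a : ℤ) (q : ℕ), q * x ≠ a ∧ N * |q * x - a| < 1) : Irrational x := by
  rintro ⟨r, rfl⟩
  obtain ⟨a, q, hne, hlt⟩ := h r.den
  have hden : (r : ℝ) * r.den = r.num := by exact_mod_cast Rat.mul_den_eq_num r
  have hint : (r.den : ℝ) * (q * r - a) = (q * r.num - r.den * a : ℤ) := by
    push_cast
    linear_combination (q : ℝ) * hden
  rw [← Nat.abs_cast r.den, ← abs_mul, hint, ← Int.cast_abs] at hlt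
  have hzero := Int.abs_lt_one_iff.1 (by exact_mod_cast hlt)
  rw [hzero, Int.cast_zero, mul_eq_zero, sub_eq_zero] at hint
  exact hint.elim (Nat.cast_ne_zero.2 r.den_ne_zero) hne

namespace AnosovKatokSequence

variable (𝒜 : AnosovKatokSequence)

section Angle

lemma angle_succ (n : ℕ) :
    (𝒜.stage (n + 1)).angle = (𝒜.stage n).angle + 1 / (𝒜.stage (n + 1)).q := by
  rw [q_succ, stage_succ, Stage.angle_next]
  push_cast
  rfl

lemma exists_limitAngle : ∃ α, Tendsto (fun n => (𝒜.stage n).angle) atTop (𝓝 α) ∧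
    ∀ n, dist (𝒜.stage n).angle α ≤ 2 * (1 / (𝒜.stage (n + 1)).q) :=
  exists_tendsto_dist_le_two_mul (b := fun n => 1 / ((𝒜.stage (n + 1)).q : ℝ))
    (fun n => 𝒜.one_div_q_succ_le (n + 1)) fun n => by
      rw [angle_succ, dist_self_add_right, Real.norm_of_nonneg (by positivity)]

/-- The rotation number of the limit diffeomorphism. -/
def limitAngle : ℝ := 𝒜.exists_limitAngle.choose

lemma tendsto_angle : Tendsto (fun n => (𝒜.stage n).angle) atTop (𝓝 𝒜.limitAngle) :=
  𝒜.exists_limitAngle.choose_spec.1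

lemma dist_angle_limitAngle_le (n : ℕ) :
    dist (𝒜.stage n).angle 𝒜.limitAngle ≤ 2 * (1 / (𝒜.stage (n + 1)).q) :=
  𝒜.exists_limitAngle.choose_spec.2 n

lemma angle_lt_limitAngle (n : ℕ) : (𝒜.stage n).angle < 𝒜.limitAngle := by
  have hmono : StrictMono fun n => (𝒜.stage n).angle := strictMono_nat_of_lt_succ fun n => by
    rw [angle_succ, lt_add_iff_pos_right, one_div_pos, Nat.cast_pos]
    exact (𝒜.stage (n + 1)).q_pos
  exact (hmono n.lt_succ_self).trans_le (hmono.monotone.ge_of_tendsto 𝒜.tendsto_angle _)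

lemma irrational_limitAngle : Irrational 𝒜.limitAngle := by
  refine irrational_of_forall_exists_abs_mul_sub_lt fun n =>
    ⟨(𝒜.stage n).a, (𝒜.stage n).q, ?_⟩
  have hq : (0 : ℝ) < (𝒜.stage n).q := Nat.cast_pos.2 (𝒜.stage n).q_pos
  have ha : ((𝒜.stage n).a : ℝ) = (𝒜.stage n).q * (𝒜.stage n).angle := by
    rw [Stage.angle]
    field_simp
  have hlt : 2 * (n : ℝ) < 4 ^ 𝒜.k n := by
    have h2 : n < 2 ^ n := Nat.lt_two_pow_self
    have h4 : 4 ^ n ≤ 4 ^ 𝒜.k n := Nat.pow_le_pow_right (by norm_num) (𝒜.k_strictMono.le_apply)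
    have : 4 ^ n = 2 ^ n * 2 ^ n := by rw [← mul_pow]; norm_num
    exact_mod_cast (by nlinarith : 2 * n < 4 ^ 𝒜.k n)
  rw [ha, ← mul_sub, abs_mul, Nat.abs_cast]
  refine ⟨(mul_lt_mul_of_pos_left (𝒜.angle_lt_limitAngle n) hq).ne', ?_⟩
  calc (n : ℝ) * ((𝒜.stage n).q * |𝒜.limitAngle - (𝒜.stage n).angle|)
      ≤ n * ((𝒜.stage n).q * (2 * (1 / (𝒜.stage (n + 1)).q))) := by
        gcongr
        rw [← Real.dist_eq, dist_comm]
        exact 𝒜.dist_angle_limitAngle_le n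
    _ = 2 * n / 4 ^ 𝒜.k n := by
        rw [q_succ]
        push_cast
        field_simp
    _ < 1 := (div_lt_one (by positivity)).2 hlt

end Angle

section Factor

lemma dist_factor_succ_le (n : ℕ) (z : Torus2) :
    dist ((𝒜.stage n).factor z) ((𝒜.stage (n + 1)).factor z) ≤ 1 / (𝒜.stage n).q := by
  have hq : (0 : ℝ) < (𝒜.stage n).q := Nat.cast_pos.2 (𝒜.stage n).q_pos
  have hk : (1 : ℝ) ≤ 𝒜.k n := Nat.one_le_cast.2 (𝒜.admissible n).pos
  rw [dist_comm, stage_succ]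
  refine ((𝒜.stage n).dist_factor_next_le _ _ z).trans ?_
  gcongr
  exact le_mul_of_one_le_left hq.le hk

lemma exists_factor (z : Torus2) : ∃ x, Tendsto (fun n => (𝒜.stage n).factor z) atTop (𝓝 x) ∧
    ∀ n, dist ((𝒜.stage n).factor z) x ≤ 2 * (1 / (𝒜.stage n).q) :=
  exists_tendsto_dist_le_two_mul (b := fun n => 1 / ((𝒜.stage n).q : ℝ))
    𝒜.one_div_q_succ_le fun n => 𝒜.dist_factor_succ_le n z

/-- The factor map from the limit diffeomorphism to a circle rotation. -/
def factor (z : Torus2) : Torus1 := (𝒜.exists_factor z).choose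

lemma tendsto_factor (z : Torus2) :
    Tendsto (fun n => (𝒜.stage n).factor z) atTop (𝓝 (𝒜.factor z)) :=
  (𝒜.exists_factor z).choose_spec.1

lemma dist_factor_le (n : ℕ) (z : Torus2) :
    dist ((𝒜.stage n).factor z) (𝒜.factor z) ≤ 2 * (1 / (𝒜.stage n).q) :=
  (𝒜.exists_factor z).choose_spec.2 n

lemma measurePreserving_factor : MeasurePreserving 𝒜.factor volume volume :=
  measurePreserving_of_tendsto (fun n => (𝒜.stage n).measurePreserving_factor) 𝒜.tendsto_factor

lemma tendstoUniformly_factor :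
    TendstoUniformly (fun n => (𝒜.stage n).factor) 𝒜.factor atTop := by
  refine tendstoUniformly_of_dist_le_half_pow fun n z => (𝒜.dist_factor_le n z).trans ?_
  have h := le_mul_half_pow (b := fun n => 1 / ((𝒜.stage n).q : ℝ)) 𝒜.one_div_q_succ_le n
  have hq : 1 / ((𝒜.stage 0).q : ℝ) ≤ 1 :=
    (div_le_one (Nat.cast_pos.2 (𝒜.stage 0).q_pos)).2 (Nat.one_le_cast.2 (𝒜.stage 0).q_pos)
  have : (0 : ℝ) ≤ (1 / 2) ^ n := by positivity
  nlinarith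

lemma continuous_factor : Continuous 𝒜.factor :=
  𝒜.tendstoUniformly_factor.continuous (.of_forall fun n => (𝒜.stage n).continuous_factor)

lemma factor_map (z : Torus2) : 𝒜.factor (𝒜.map z) = 𝒜.factor z + 𝒜.limitAngle := by
  obtain ⟨p, rfl⟩ := torusProj_surjective z
  have hflow : Tendsto (fun n => torusProj ((𝒜.stage n).flow (𝒜.stage n).angle p)) atTop
      (𝓝 (𝒜.map (torusProj p))) := by
    rw [map_torusProj]
    exact (isOpenQuotientMap_torusProj.continuous.tendsto _).comp
      ((tendstoUniformly_of_dist_le_half_pow 𝒜.dist_limitLift_le).tendsto_at p)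
  have hangle : Tendsto (fun n => ((𝒜.stage n).angle : Torus1)) atTop (𝓝 𝒜.limitAngle) :=
    ((AddCircle.continuous_mk' 1).tendsto _).comp 𝒜.tendsto_angle
  refine tendsto_nhds_unique (𝒜.tendstoUniformly_factor.tendsto_comp
    𝒜.continuous_factor.continuousAt hflow) (((𝒜.tendsto_factor _).add hangle).congr fun n => ?_)
  rw [← ((𝒜.stage n).isVolumeLift_flow _).equivariant.descend_torusProj, Stage.factor_flow]

/-- The points lying in the sets `linearSet` of all but finitely many stages. -/
def linearSet : Set Torus2 :=
  liminf (fun n => (𝒜.stage n).linearSet (sawtoothWidth_pos n) (𝒜.k n)) atTop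

lemma measurableSet_linearSet : MeasurableSet 𝒜.linearSet :=
  .measurableSet_liminf fun n => (𝒜.stage n).measurableSet_linearSet _ _

lemma ae_mem_linearSet : ∀ᵐ z, z ∈ 𝒜.linearSet := by
  have hsum : ∑' n, volume ((𝒜.stage n).linearSet (sawtoothWidth_pos n) (𝒜.k n))ᶜ ≠ ⊤ := by
    have hs : Summable fun n => 4 * sawtoothWidth n :=
      ((summable_nat_add_iff 3).2 summable_geometric_two).mul_left 4
    refine ne_top_of_le_ne_top ?_
      (ENNReal.tsum_le_tsum fun n => (𝒜.stage n).volume_compl_linearSet_le _ _)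
    rw [← ENNReal.ofReal_tsum_of_nonneg
      (fun n => mul_nonneg zero_le_four (sawtoothWidth_pos n).le) hs]
    exact ENNReal.ofReal_ne_top
  filter_upwards [ae_eventually_notMem hsum] with z hz
  exact mem_liminf_iff_eventually_mem.2 (by simpa only [notMem_compl_iff] using hz)

lemma injOn_factor : InjOn 𝒜.factor 𝒜.linearSet := by
  intro z hz z' hz' h
  have hlim : Tendsto (fun n : ℕ => (1 / 2 : ℝ) ^ n) atTop (𝓝 0) :=
    tendsto_pow_atTop_nhds_zero_of_lt_one (by norm_num) (by norm_num)
  refine dist_le_zero.1 (ge_of_tendsto hlim ?_)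
  filter_upwards [mem_liminf_iff_eventually_mem.1 hz,
    mem_liminf_iff_eventually_mem.1 hz'] with n hn hn'
  refine (𝒜.admissible n).dist_le_of_mem_linearSet z hn z' hn' ?_
  rw [← stage_succ]
  have hd := 𝒜.dist_factor_le (n + 1) z
  rw [h] at hd
  refine (dist_triangle_right _ _ _).trans
    ((add_le_add hd (𝒜.dist_factor_le (n + 1) z')).trans_eq ?_)
  ring

end Factor

end AnosovKatokSequence

section IsoToIrrationalRotation

variable {T : Torus2 → Torus2}

lemma isoToIrrationalRotation_of_injOn (hT : MeasurePreserving T volume volume) {α : ℝ}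
    (hα : Irrational α) {ψ : Torus2 → Torus1} (hψ : MeasurePreserving ψ volume volume)
    (hψT : ∀ z, ψ (T z) = ψ z + α) {G : Set Torus2} (hG : MeasurableSet G)
    (hG' : ∀ᵐ z, z ∈ G) (hinj : InjOn ψ G) : IsoToIrrationalRotation T := by
  set A : Set Torus2 := ⋂ i : ℕ, T^[i] ⁻¹' G
  have hA : MeasurableSet A := .iInter fun i => hT.measurable.iterate i hG
  have hAG : A ⊆ G := fun z hz => mem_iInter.1 hz 0
  have hTA : MapsTo T A A := fun z hz => mem_iInter.2 fun i => mem_iInter.1 hz (i + 1)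
  have hA' : volume Aᶜ = 0 := by
    have : ∀ᵐ z, ∀ i : ℕ, z ∈ T^[i] ⁻¹' G :=
      ae_all_iff.2 fun i => (hT.iterate i).quasiMeasurePreserving.ae hG'
    filter_upwards [this] with z hz using mem_iInter.2 hz
  have hB : MeasurableSet (ψ '' A) := hA.image_of_measurable_injOn hψ.measurable (hinj.mono hAG)
  have hB' : volume (ψ '' A)ᶜ = 0 := by
    rw [← hψ.measure_preimage hB.compl.nullMeasurableSet]
    exact measure_mono_null (fun z hz hzA => hz (mem_image_of_mem ψ hzA)) hA'
  obtain ⟨φ, hφ, hφψ⟩ : ∃ φ : Torus1 → Torus2, Measurable φ ∧ ∀ z ∈ A, φ (ψ z) = z := by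
    have := hA.standardBorel
    have hemb : MeasurableEmbedding fun z : A => ψ z :=
      (hψ.measurable.comp measurable_subtype_coe).measurableEmbedding
        fun _ _ h => Subtype.ext (hinj.mono hAG (Subtype.coe_prop _) (Subtype.coe_prop _) h)
    obtain ⟨φ, hφ, h⟩ := hemb.exists_measurable_extend measurable_subtype_coe fun _ => ⟨0⟩
    exact ⟨φ, hφ, fun z hz => congrFun h ⟨z, hz⟩⟩
  refine ⟨α, hα, A, ψ '' A, ψ, φ, hA, hB, hA', hB', hTA, ?_, hψ.measurable, hφ,
    mapsTo_image ψ A, ?_, hφψ, ?_, hψ.map_eq, fun z _ => hψT z⟩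
  · rintro _ ⟨z, hz, rfl⟩
    exact ⟨T z, hTA hz, hψT z⟩
  · rintro _ ⟨z, hz, rfl⟩
    rwa [hφψ z hz]
  · rintro _ ⟨z, hz, rfl⟩
    rw [hφψ z hz]

lemma ergodic_add_right_of_irrational {α : ℝ} (hα : Irrational α) :
    Ergodic (fun x : Torus1 => x + α) volume := by
  refine AddCircle.ergodic_add_right.2 (addOrderOf_eq_zero_iff'.2 fun n hn h => ?_)
  rw [← AddCircle.coe_nsmul, ← AddCircle.coe_zero, Torus1.coe_eq_coe_iff] at h
  obtain ⟨m, hm⟩ := h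
  exact (hα.natCast_mul hn.ne').ne_int m (by simpa using hm)

lemma IsoToIrrationalRotation.ergodic (hT : MeasurePreserving T volume volume)
    (h : IsoToIrrationalRotation T) : Ergodic T volume := by
  obtain ⟨α, hα, A, B, ψ, φ, -, -, hA, hB, hTA, -, hψ, hφ, -, hφB, hφψ, hψφ, hψ', hψT⟩ := h
  have hψ_mp : MeasurePreserving ψ volume volume := ⟨hψ, hψ'⟩
  refine { hT with aeconst_set := fun s hs hinv => ?_ }
  have hs_eq : ψ ⁻¹' (φ ⁻¹' s) =ᵐ[volume] s := by
    filter_upwards [show ∀ᵐ z, z ∈ A from hA] with z hz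
    exact congrArg (· ∈ s) (hφψ z hz)
  have hs_inv : (fun x : Torus1 => x + α) ⁻¹' (φ ⁻¹' s) =ᵐ[volume] φ ⁻¹' s := by
    have hconj : ∀ y ∈ B, φ (y + α) = T (φ y) := fun y hy => by
      rw [← hφψ _ (hTA (hφB hy)), hψT _ (hφB hy), hψφ y hy]
    filter_upwards [show ∀ᵐ y, y ∈ B from hB] with y hy
    have : φ y ∈ T ⁻¹' s ↔ φ y ∈ s := by rw [hinv]
    exact propext (by rwa [mem_preimage, ← hconj y hy] at this)
  rw [eventuallyConst_set']
  refine ((ergodic_add_right_of_irrational hα).quasiErgodic.ae_empty_or_univ₀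
    (hφ hs).nullMeasurableSet hs_inv).imp (fun h0 => ?_) fun h0 => ?_ <;>
  exact hs_eq.symm.trans (hψ_mp.quasiMeasurePreserving.preimage_ae_eq h0)

end IsoToIrrationalRotation

end

/-- There exists an ergodic `C^∞` volume-preserving diffeomorphism `T` of
`𝕋²`, measure-theoretically isomorphic to an irrational circle rotation, whose upper
topological slow entropy w.r.t. the logarithmic scale `a^{ln}_m(t) = (ln m)^t` equals `1`. -/
theorem stmt5 :
    ∃ T : Torus2 → Torus2,
      IsCkTorusDiffeo ⊤ T ∧
      MeasurePreserving T (volume : Measure Torus2) volume ∧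
      Ergodic T (volume : Measure Torus2) ∧
      IsoToIrrationalRotation T ∧
      HasUpperTopSlowEntropy T logScale 1 := by
  obtain ⟨𝒜⟩ : Nonempty AnosovKatokSequence := inferInstance
  have iso : IsoToIrrationalRotation 𝒜.map :=
    isoToIrrationalRotation_of_injOn 𝒜.measurePreserving_map 𝒜.irrational_limitAngle
      𝒜.measurePreserving_factor 𝒜.factor_map 𝒜.measurableSet_linearSet 𝒜.ae_mem_linearSet
      𝒜.injOn_factor
  exact ⟨𝒜.map, 𝒜.isCkTorusDiffeo_map, 𝒜.measurePreserving_map,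
    iso.ergodic 𝒜.measurePreserving_map, iso, 𝒜.hasUpperTopSlowEntropy_map⟩
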